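/- arXiv:1909.01564 — 4 statements merged into one kernel-verified Lean document; each statement's English description precedes it below -/
import Mathlib

section
/- Every finite simple graph G with linear rankwidth at most r admits a partition of its vertex set into at most 3·(r+2)!·2^{r(r+1)/2} parts, each of which induces a cograph admitting a cotree of depth at most r+2; in particular, χ(G) ≤ 3·(r+2)!·2^{r(r+1)/2} · ω(G). -/
/-!
Fix an enumeration of the vertices all of whose initial segments have cut-rank at most `r`. At the
cut just before a vertex `w`, the neighbourhoods among the later vertices span a space of dimension
at most `r`; the *active* vertices `act G w` are its greedy basis. A vertex is active on an interval
of cuts starting at the vertex itself, so a greedy colouring with `r + 1` colours gives `v` a colour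
different from those of all vertices of `act G v` (`exists_col`).

Vertices are put in one class if they agree on the colours of the active vertices listed in order of
birth followed by their own colour, on the positions of their active neighbours, and on `r` further
bits. This gives at most `(r + 1) (r + 1)! 4 ^ r` classes (`card_key_le`). For `u < v` in one class,
`act G u ∩ act G v` consists of the first `j = common G u v` vertices of both `act G u` and `act G v`,
because equal colours force equal positions. Hence `common` is an ultrametric on the class, with
`common u w = min (common u v) (common v w)` for `u < v < w` (`common_min`). The vector of `u` at `v` is a
combination of these `j` vertices which depends on `u` and `j` only, and its value at `v` is
determined by the adjacencies of `v` to active vertices, so adjacency in a class is a function of `j`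
(`adj_iff_bit`).

The balls of this ultrametric are the nodes of a cotree with levels `0, …, r + 1` (`exists_cotree`).
Moreover adjacency in a class is transitive along the order, so the size of the largest clique of the
class ending at a vertex is a proper colouring of the class with `ω(G)` colours
(`colorable_of_trans`).
-/

open scoped Classical

/-- The cut-rank of a set `X` of vertices of `G`: the rank, over the two-element field,
of the `X × Xᶜ` matrix whose `(x,y)` entry is `1` iff `x` and `y` are adjacent. -/
noncomputable def cutRank {V : Type} [Fintype V] (G : SimpleGraph V) (X : Set V) : ℕ :=
  Matrix.rank (Matrix.of fun (x : X) (y : ↥(Xᶜ)) => if G.Adj x.1 y.1 then (1 : ZMod 2) else 0)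

/-- The linear rankwidth of a finite graph: the minimum, over enumerations `v₁, …, vₙ` of the
vertex set, of the maximum cut-rank of an initial segment `{v₁, …, vᵢ}`. -/
noncomputable def lrw {V : Type} [Fintype V] (G : SimpleGraph V) : ℕ :=
  sInf { r | ∃ e : Fin (Fintype.card V) ≃ V,
    ∀ i : ℕ, cutRank G (e '' {j | (j : ℕ) < i}) ≤ r }

/-- `x` is an ancestor of `w` in the rooted tree given by parent map `par`. -/
def IsAnc {W : Type} (par : W → W) (x w : W) : Prop := ∃ k : ℕ, par^[k] w = x

/-- `x` is the least common ancestor of `u` and `v`: a common ancestor of which every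
common ancestor is an ancestor. -/
def IsLCA {W : Type} (par : W → W) (x u v : W) : Prop :=
  IsAnc par x u ∧ IsAnc par x v ∧ ∀ y : W, IsAnc par y u → IsAnc par y v → IsAnc par y x

/-- The number of nodes on the path from the root to `w` (the depth of `w`, counting nodes). -/
noncomputable def pathNodes {W : Type} (par : W → W) (root w : W) : ℕ :=
  sInf {k : ℕ | par^[k] w = root} + 1

/-- A cotree for a graph `H`: a finite rooted tree (given by a parent map) whose leaves are
exactly the vertices of `H`, with internal nodes labeled by `Bool`, such that two distinct
vertices are adjacent in `H` iff their least common ancestor is labeled `true`. -/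
structure Cotree {α : Type} (H : SimpleGraph α) where
  W : Type
  fintypeW : Fintype W
  root : W
  par : W → W
  par_root : par root = root
  reaches_root : ∀ w : W, ∃ k : ℕ, par^[k] w = root
  leafEmb : α ↪ W
  leaf_iff : ∀ w : W, (∀ w' : W, par w' = w → w' = w) ↔ ∃ a : α, leafEmb a = w
  label : W → Bool
  adj_iff : ∀ a b : α, a ≠ b → ∀ x : W, IsLCA par x (leafEmb a) (leafEmb b) →
    (H.Adj a b ↔ label x = true)

/-- The cotree has depth at most `d`: every root-to-leaf path has at most `d` nodes. -/
noncomputable def Cotree.depthLE {α : Type} {H : SimpleGraph α} (T : Cotree H) (d : ℕ) : Prop :=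
  ∀ a : α, pathNodes T.par T.root (T.leafEmb a) ≤ d

/-! ### Truncated neighbourhoods and greedy bases -/

section Order

variable {V : Type} [LinearOrder V]

/-- The neighbourhood of `x` among the vertices `y ≥ w`, as a vector over `GF(2)`. -/
noncomputable def nbr (G : SimpleGraph V) (w x : V) : V → ZMod 2 :=
  fun y => if w ≤ y ∧ G.Adj x y then 1 else 0

/-- The coordinate projection that keeps the coordinates `y ≥ w`. -/
noncomputable def trunc (w : V) : (V → ZMod 2) →ₗ[ZMod 2] (V → ZMod 2) where
  toFun f := fun y => if w ≤ y then f y else 0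
  map_add' f g := by ext y; by_cases h : w ≤ y <;> simp [h]
  map_smul' c f := by ext y; by_cases h : w ≤ y <;> simp [h]

lemma trunc_nbr (G : SimpleGraph V) {v w : V} (h : v ≤ w) (x : V) :
    trunc w (nbr G v x) = nbr G w x := by
  ext y
  by_cases hy : w ≤ y
  · simp [trunc, nbr, hy, h.trans hy]
  · simp [trunc, nbr, hy]

lemma exists_coeff {f : V → (V → ZMod 2)} {s : Finset V} {x : V → ZMod 2}
    (h : x ∈ Submodule.span (ZMod 2) (f '' (s : Set V))) :
    ∃ g : V → ZMod 2, ∑ i ∈ s, g i • f i = x := by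
  obtain ⟨c, hc⟩ := (Submodule.mem_span_image_finset_iff_exists_fun _).1 h
  refine ⟨fun i => if hi : i ∈ s then c ⟨i, hi⟩ else 0, ?_⟩
  rw [← hc, ← Finset.sum_coe_sort]
  exact Finset.sum_congr rfl fun i _ => by simp

lemma card_le_rank {ι m n : Type} [Fintype ι] [Fintype n] [Finite m] (M : Matrix m n (ZMod 2))
    (f : ι → m) (h : LinearIndependent (ZMod 2) fun i => M (f i)) : Fintype.card ι ≤ M.rank := by
  rw [Matrix.rank_eq_finrank_span_row, ← finrank_span_eq_card h]
  refine Submodule.finrank_mono (Submodule.span_mono ?_)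
  rintro _ ⟨x, rfl⟩
  exact ⟨f x, rfl⟩

variable [Fintype V]

/-- The lexicographically least basis of the span of the vectors `nbr G w x`, `x < w`: the vertices
`x < w` whose vector is not spanned by the vectors of smaller vertices. -/
noncomputable def act (G : SimpleGraph V) (w : V) : Finset V :=
  Finset.univ.filter fun x =>
    x < w ∧ nbr G w x ∉ Submodule.span (ZMod 2) (nbr G w '' {y | y < x})

lemma mem_act {G : SimpleGraph V} {w x : V} : x ∈ act G w ↔
    x < w ∧ nbr G w x ∉ Submodule.span (ZMod 2) (nbr G w '' {y | y < x}) := by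
  simp [act]

/-- The cuts at which a vertex is active form an interval starting right after the vertex. -/
lemma act_interval {G : SimpleGraph V} {x v w : V} (hx : x ∈ act G w) (hxv : x < v)
    (hvw : v ≤ w) : x ∈ act G v := by
  rw [mem_act] at hx ⊢
  refine ⟨hxv, fun hs => hx.2 ?_⟩
  have := Submodule.mem_map_of_mem (f := trunc w) hs
  rw [trunc_nbr G hvw, Submodule.map_span, Set.image_image] at this
  simpa only [trunc_nbr G hvw] using this

lemma act_linearIndepOn (G : SimpleGraph V) (w : V) :
    LinearIndepOn (ZMod 2) (nbr G w) (act G w : Set V) := by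
  rw [linearIndepOn_finset_iff]
  intro f hf
  by_contra! hne
  obtain ⟨i, hi, hfi⟩ := hne
  -- The largest vertex with a nonzero coefficient is spanned by the smaller ones.
  obtain ⟨m, hm, hmax⟩ := ((act G w).filter fun x => f x ≠ 0).exists_max_image id
    ⟨i, by simp [hi, hfi]⟩
  rw [Finset.mem_filter] at hm
  apply (mem_act.1 hm.1).2
  rw [← Finset.add_sum_erase _ _ hm.1] at hf
  have hmem : ∑ x ∈ (act G w).erase m, f x • nbr G w x ∈
      Submodule.span (ZMod 2) (nbr G w '' {y | y < m}) := by
    refine Submodule.sum_mem _ fun x hx => ?_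
    rw [Finset.mem_erase] at hx
    by_cases hfx : f x = 0
    · simp [hfx]
    · refine Submodule.smul_mem _ _ (Submodule.subset_span ⟨x, ?_, rfl⟩)
      exact lt_of_le_of_ne (hmax x (by simp [hx.2, hfx])) hx.1
  have h2 : f m • nbr G w m ∈ Submodule.span (ZMod 2) (nbr G w '' {y | y < m}) := by
    rw [eq_neg_of_add_eq_zero_left hf]
    exact Submodule.neg_mem _ hmem
  exact (Submodule.smul_mem_iff _ hm.2).1 h2

/-- Extension by zero carries the rows of the cut matrix to the vectors `nbr G w x`, so the rows of
the active vertices are independent. -/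
lemma act_card_le {G : SimpleGraph V} {w : V} {r : ℕ} (h : cutRank G {x | x < w} ≤ r) :
    (act G w).card ≤ r := by
  refine le_trans ?_ h
  unfold cutRank
  let M : Matrix {x : V | x < w} ↥({x : V | x < w}ᶜ) (ZMod 2) :=
    Matrix.of fun x y => if G.Adj x.1 y.1 then (1 : ZMod 2) else 0
  let E := Function.ExtendByZero.linearMap (ZMod 2)
    (Subtype.val : ↥({x : V | x < w}ᶜ) → V)
  let b : ↥(act G w) → (↥({x : V | x < w}ᶜ) → ZMod 2) :=
    fun x => M ⟨x.1, (mem_act.1 x.2).1⟩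
  have hb : LinearIndependent (ZMod 2) b := by
    refine LinearIndependent.of_comp E ?_
    have hli : LinearIndependent (ZMod 2) fun x : ↥(act G w) => nbr G w x :=
      act_linearIndepOn G w
    convert hli using 1
    ext x y
    by_cases hy : w ≤ y
    · have h1 : y = (Subtype.val : ↥({x : V | x < w}ᶜ) → V) ⟨y, by simpa using hy⟩ := rfl
      have h2 : E (b x) y = b x ⟨y, by simpa using hy⟩ := by
        conv_lhs => rw [h1]
        exact Subtype.val_injective.extend_apply _ _ _
      rw [Function.comp_apply, h2]
      simp [b, M, nbr, hy]
    · have : E (b x) y = 0 := by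
        refine Function.extend_apply' _ _ _ ?_
        rintro ⟨⟨z, hz⟩, rfl⟩
        simp at hz
        exact hy hz
      simp [this, nbr, hy]
  have hcard := card_le_rank M (fun x : ↥(act G w) => ⟨x.1, (mem_act.1 x.2).1⟩) hb
  rw [Fintype.card_coe] at hcard
  refine hcard.trans (le_of_eq ?_)
  congr!

lemma nbr_mem_span_act (G : SimpleGraph V) (w x : V) (hx : x < w) :
    nbr G w x ∈ Submodule.span (ZMod 2)
      (nbr G w '' (((act G w).filter fun y => y ≤ x : Finset V) : Set V)) := by
  induction x using WellFoundedLT.induction with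
  | ind x ih =>
  by_cases hxa : x ∈ act G w
  · exact Submodule.subset_span ⟨x, by simp [hxa], rfl⟩
  · have hs : nbr G w x ∈ Submodule.span (ZMod 2) (nbr G w '' {y | y < x}) := by
      by_contra hs
      exact hxa (mem_act.2 ⟨hx, hs⟩)
    refine Submodule.span_le.2 ?_ hs
    rintro _ ⟨y, hy, rfl⟩
    refine Submodule.span_mono (Set.image_mono ?_) (ih y hy (lt_trans hy hx))
    intro z hz
    simp only [Finset.coe_filter, Set.mem_ofPred_eq] at hz ⊢
    exact ⟨hz.1, hz.2.trans (le_of_lt hy)⟩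

/-! ### Colours, positions and classes -/

/-- Greedy colouring along the order: `v` only has to avoid the at most `r` colours of the vertices
active just before it. -/
lemma exists_col {G : SimpleGraph V} {r : ℕ} (hr : ∀ w, (act G w).card ≤ r) :
    ∃ col : V → Fin (r + 1), ∀ v, ∀ x ∈ act G v, col x ≠ col v := by
  have hex : ∀ (v : V) (f : (y : V) → y < v → Fin (r + 1)),
      ∃ c, ∀ x (hx : x ∈ act G v), f x (mem_act.1 hx).1 ≠ c := by
    intro v f
    have : ((act G v).attach.image fun x => f x.1 (mem_act.1 x.2).1).card <
        (Finset.univ : Finset (Fin (r + 1))).card := by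
      refine lt_of_le_of_lt Finset.card_image_le ?_
      simpa using Nat.lt_succ_of_le (hr v)
    obtain ⟨c, -, hc⟩ := Finset.exists_mem_notMem_of_card_lt_card this
    refine ⟨c, fun x hx h => hc ?_⟩
    exact Finset.mem_image.2 ⟨⟨x, hx⟩, Finset.mem_attach _ _, h⟩
  choose F hF using hex
  let wf : WellFounded ((· < ·) : V → V → Prop) := wellFounded_lt
  refine ⟨wf.fix F, fun v x hx => ?_⟩
  rw [wf.fix_eq F v]
  exact hF v (fun y _ => wf.fix F y) x hx

/-- The number of elements of `act G v` preceding `x`. -/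
noncomputable def posn (G : SimpleGraph V) (v x : V) : ℕ :=
  ((act G v).filter fun y => y < x).card

lemma posn_lt {G : SimpleGraph V} {v x y : V} (hx : x ∈ act G v) (h : x < y) :
    posn G v x < posn G v y := by
  refine Finset.card_lt_card ⟨fun z hz => ?_, fun hs => ?_⟩
  · simp only [Finset.mem_filter] at hz ⊢
    exact ⟨hz.1, hz.2.trans h⟩
  · have := hs (x := x) (by simp [hx, h])
    simp at this

lemma posn_le (G : SimpleGraph V) (v : V) {x y : V} (h : x ≤ y) :
    posn G v x ≤ posn G v y := by
  refine Finset.card_le_card fun z hz => ?_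
  simp only [Finset.mem_filter] at hz ⊢
  exact ⟨hz.1, hz.2.trans_le h⟩

lemma posn_le_card (G : SimpleGraph V) (v x : V) : posn G v x ≤ (act G v).card :=
  Finset.card_le_card (Finset.filter_subset _ _)

lemma posn_self (G : SimpleGraph V) (v : V) : posn G v v = (act G v).card := by
  unfold posn
  rw [Finset.filter_true_of_mem]
  exact fun x hx => (mem_act.1 hx).1

lemma posn_inj {G : SimpleGraph V} {v x y : V} (hx : x ∈ insert v (act G v))
    (hy : y ∈ insert v (act G v)) (h : posn G v x = posn G v y) : x = y := by
  have key : ∀ x y, x ∈ insert v (act G v) → y ∈ insert v (act G v) → x < y →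
      posn G v x < posn G v y := by
    intro x y hx hy hxy
    rcases Finset.mem_insert.1 hx with rfl | hx
    · rcases Finset.mem_insert.1 hy with rfl | hy
      · exact absurd hxy (lt_irrefl _)
      · exact absurd (mem_act.1 hy).1 (not_lt_of_gt hxy)
    · exact posn_lt hx hxy
  rcases lt_trichotomy x y with h1 | h1 | h1
  · exact absurd h (key x y hx hy h1).ne
  · exact h1
  · exact absurd h (key y x hy hx h1).ne'

lemma exists_perm {α β : Type} [Fintype β] (s : Finset α) (f g : α → β)
    (hf : Set.InjOn f s) (hg : Set.InjOn g s) :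
    ∃ p : Equiv.Perm β, ∀ x ∈ s, p (f x) = g x := by
  let e : {y // y ∈ f '' (s : Set α)} ≃ {y // y ∈ g '' (s : Set α)} :=
    (Equiv.Set.imageOfInjOn f _ hf).symm.trans (Equiv.Set.imageOfInjOn g _ hg)
  refine ⟨e.extendSubtype, fun x hx => ?_⟩
  rw [Equiv.extendSubtype_apply_of_mem e (f x) ⟨x, hx, rfl⟩]
  have : (Equiv.Set.imageOfInjOn f _ hf).symm ⟨f x, ⟨x, hx, rfl⟩⟩ = ⟨x, hx⟩ := by
    rw [Equiv.symm_apply_eq]; rfl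
  simp only [e, Equiv.trans_apply, this]
  rfl

/-- Vertices active at the same time have distinct colours and distinct positions, so one
permutation matches colours to positions. -/
lemma exists_posn_perm {G : SimpleGraph V} {r : ℕ} (hr : ∀ w, (act G w).card ≤ r)
    {col : V → Fin (r + 1)} (hcol : ∀ v, ∀ x ∈ act G v, col x ≠ col v) (v : V) :
    ∃ p : Equiv.Perm (Fin (r + 1)), ∀ x ∈ insert v (act G v), (p (col x) : ℕ) = posn G v x := by
  have hlt : ∀ x, posn G v x < r + 1 := fun x =>
    Nat.lt_succ_of_le ((posn_le_card G v x).trans (hr v))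
  have hne : ∀ x ∈ insert v (act G v), ∀ y ∈ insert v (act G v), x < y → col x ≠ col y := by
    intro x hx y hy hxy
    rcases Finset.mem_insert.1 hx with rfl | hx
    · rcases Finset.mem_insert.1 hy with rfl | hy
      · exact absurd hxy (lt_irrefl _)
      · exact absurd (mem_act.1 hy).1 (not_lt_of_gt hxy)
    · rcases Finset.mem_insert.1 hy with rfl | hy
      · exact hcol _ _ hx
      · exact hcol _ _ (act_interval hx hxy (mem_act.1 hy).1.le)
  obtain ⟨p, hp⟩ := exists_perm (insert v (act G v)) col
    (fun x => (⟨posn G v x, hlt x⟩ : Fin (r + 1))) (by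
      intro x hx y hy hxy
      rcases lt_trichotomy x y with h1 | h1 | h1
      · exact absurd hxy (hne x hx y hy h1)
      · exact h1
      · exact absurd hxy.symm (hne y hy x hx h1)) (by
      intro x hx y hy hxy
      exact posn_inj hx hy (by simpa using hxy))
  exact ⟨p, fun x hx => by rw [hp x hx]⟩

/-- The number of vertices active just before both `u` and `v`. -/
noncomputable def common (G : SimpleGraph V) (u v : V) : ℕ := (act G u ∩ act G v).card

/-- The vector of `v` at some later cut, at which exactly the first `j` vertices of `act G v` are
still active, is expanded in those `j` vertices; the expansion, evaluated with the adjacencies of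
its terms to `v` itself, is `1`. Inside a class the later vertex and `v` have the same adjacencies to
these vertices, so that this is the adjacency of the two (`adj_iff_bit`). -/
def bit (G : SimpleGraph V) (v : V) (j : ℕ) : Prop :=
  ∃ w, ∃ g : V → ZMod 2, v < w ∧
    act G v ∩ act G w = (act G v).filter (fun x => posn G v x < j) ∧
    ∑ x ∈ act G v ∩ act G w, g x • nbr G w x = nbr G w v ∧
    ∑ x ∈ act G v ∩ act G w, g x * (if G.Adj x v then 1 else 0) = 1

lemma not_bit_zero (G : SimpleGraph V) (v : V) : ¬ bit G v 0 := by
  rintro ⟨w, g, -, hA, -, h⟩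
  rw [hA] at h
  simp at h

/-- What is used about two vertices of the same class: `u` is no longer active just before `v`, and
each vertex active at both cuts has the same position and the same adjacency at both. -/
structure Sim (G : SimpleGraph V) (u v : V) : Prop where
  notMem : u ∉ act G v
  posn_eq : ∀ x ∈ act G u ∩ act G v, posn G u x = posn G v x
  adj_iff : ∀ x ∈ act G u ∩ act G v, (G.Adj x u ↔ G.Adj x v)

lemma inter_eq_right {G : SimpleGraph V} {u v : V} (huv : u < v) :
    act G u ∩ act G v = (act G v).filter fun x => x < u := by
  ext x
  simp only [Finset.mem_inter, Finset.mem_filter]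
  exact ⟨fun h => ⟨h.2, (mem_act.1 h.1).1⟩, fun h => ⟨act_interval h.1 h.2 huv.le, h.1⟩⟩

lemma common_eq_posn {G : SimpleGraph V} {u v : V} (huv : u < v) :
    common G u v = posn G v u := by
  rw [common, inter_eq_right huv, posn]

/-- The vertices active at both `u` and `v` are the first ones active at `v`. -/
lemma inter_right {G : SimpleGraph V} {u v : V} (huv : u < v) :
    act G u ∩ act G v = (act G v).filter fun x => posn G v x < common G u v := by
  rw [common_eq_posn huv, inter_eq_right huv]
  refine Finset.filter_congr fun x hx => ⟨posn_lt hx, fun h => ?_⟩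
  by_contra hux
  exact absurd (posn_le G v (not_lt.1 hux)) (not_le_of_gt h)

/-- Inside a class, the vertices active at both `u` and `v` are also the first ones active at `u`:
positions agree, and there are at most `j` vertices at positions below `j`. -/
lemma inter_left {G : SimpleGraph V} {u v : V} (huv : u < v) (hs : Sim G u v) :
    act G u ∩ act G v = (act G u).filter fun x => posn G u x < common G u v := by
  refine Finset.eq_of_subset_of_card_le (fun x hx => ?_) ?_
  · have h := hx
    rw [inter_right huv, Finset.mem_filter] at h
    rw [Finset.mem_filter, hs.posn_eq x hx]
    exact ⟨(Finset.mem_inter.1 hx).1, h.2⟩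
  · change _ ≤ common G u v
    rw [← Finset.card_range (common G u v)]
    refine Finset.card_le_card_of_injOn (posn G u) (fun x hx => ?_) (fun x hx y hy h => ?_)
    · simpa using (Finset.mem_filter.1 hx).2
    · exact posn_inj (Finset.mem_insert_of_mem (Finset.mem_filter.1 hx).1)
        (Finset.mem_insert_of_mem (Finset.mem_filter.1 hy).1) h

/-- Inside a class, `common` is ultrametric, with convex balls. -/
lemma common_min {G : SimpleGraph V} {u v w : V} (huv : u < v) (hvw : v < w)
    (hs : Sim G v w) :
    common G u w = min (common G u v) (common G v w) := by
  have h1 : act G u ∩ act G w = (act G u ∩ act G v) ∩ (act G v ∩ act G w) := by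
    ext x
    simp only [Finset.mem_inter]
    constructor
    · rintro ⟨h, h'⟩
      have := act_interval h' ((mem_act.1 h).1.trans huv) hvw.le
      exact ⟨⟨h, this⟩, this, h'⟩
    · rintro ⟨⟨h, -⟩, -, h'⟩
      exact ⟨h, h'⟩
  have e1 := inter_right huv (G := G)
  have e2 := inter_left hvw hs
  rcases le_total (common G u v) (common G v w) with h | h
  · rw [min_eq_left h]
    unfold common
    rw [h1, Finset.inter_eq_left.2]
    rw [e1, e2]
    intro x hx
    rw [Finset.mem_filter] at hx ⊢
    exact ⟨hx.1, hx.2.trans_le h⟩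
  · rw [min_eq_right h]
    unfold common
    rw [h1, Finset.inter_eq_right.2]
    rw [e1, e2]
    intro x hx
    rw [Finset.mem_filter] at hx ⊢
    exact ⟨hx.1, hx.2.trans_le h⟩

/-- As `u` itself is not active at `v`, its vector is spanned by active vertices before `u`. -/
lemma exists_expansion {G : SimpleGraph V} {u v : V} (huv : u < v) (hs : Sim G u v) :
    ∃ g : V → ZMod 2, ∑ x ∈ act G u ∩ act G v, g x • nbr G v x = nbr G v u := by
  apply exists_coeff
  convert nbr_mem_span_act G v u huv using 4
  rw [inter_eq_right huv]
  refine Finset.filter_congr fun x hx => ⟨le_of_lt, fun h => lt_of_le_of_ne h ?_⟩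
  rintro rfl
  exact hs.notMem hx

/-- Two expansions at different cuts in the same active vertices agree, as both are expansions at
the later cut. -/
lemma expansion_unique {G : SimpleGraph V} {u v w : V} {A : Finset V} {g g' : V → ZMod 2}
    (hvw : v ≤ w) (hA : A ⊆ act G w)
    (hg : ∑ x ∈ A, g x • nbr G v x = nbr G v u)
    (hg' : ∑ x ∈ A, g' x • nbr G w x = nbr G w u) : ∀ x ∈ A, g x = g' x := by
  have h1 : ∑ x ∈ A, g x • nbr G w x = nbr G w u := by
    have := congrArg (trunc w) hg
    simpa only [map_sum, map_smul, trunc_nbr G hvw] using this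
  have hli := (act_linearIndepOn G w).mono (Finset.coe_subset.2 hA)
  rw [linearIndepOn_finset_iff] at hli
  intro x hx
  refine sub_eq_zero.1 (hli (fun x => g x - g' x) ?_ x hx)
  simp only [sub_smul, Finset.sum_sub_distrib, h1, hg', sub_self]

lemma adj_iff_bit {G : SimpleGraph V} {u v : V} (huv : u < v) (hs : Sim G u v) :
    G.Adj u v ↔ bit G u (common G u v) := by
  obtain ⟨g, hg⟩ := exists_expansion huv hs
  have hval : ∑ x ∈ act G u ∩ act G v, g x * (if G.Adj x u then (1 : ZMod 2) else 0) =
      if G.Adj u v then 1 else 0 := by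
    have := congrFun hg v
    simp only [Finset.sum_apply, Pi.smul_apply, nbr, le_refl, true_and, smul_eq_mul] at this
    rw [← this]
    refine Finset.sum_congr rfl fun x hx => ?_
    simp only [hs.adj_iff x hx]
  constructor
  · intro h
    exact ⟨v, g, huv, inter_left huv hs, hg, by rw [hval, if_pos h]⟩
  · rintro ⟨w, g', huw, hA, hg', hsum⟩
    rw [← inter_left huv hs] at hA
    rw [hA] at hg' hsum
    have hgg : ∀ x ∈ act G u ∩ act G v, g x = g' x := by
      rcases le_total v w with h | h
      · refine expansion_unique h ?_ hg hg'
        rw [← hA]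
        exact Finset.inter_subset_right
      · intro x hx
        exact (expansion_unique h Finset.inter_subset_right hg' hg x hx).symm
    rw [Finset.sum_congr rfl fun x hx => by rw [← hgg x hx], hval] at hsum
    by_contra h
    simp [h] at hsum

/-- The names of the classes. The class of `v` records the number of active vertices just before
`v`, the bijection from colours to positions, the positions of the active neighbours of `v`, and the
values `bit G v (i + 1)`. -/
abbrev Key (r : ℕ) : Type :=
  (Fin (r + 1) × Equiv.Perm (Fin (r + 1))) × ((Fin r → Bool) × (Fin r → Bool))

lemma card_key_le (r : ℕ) :
    Fintype.card (Key r) ≤ 3 * Nat.factorial (r + 2) * 2 ^ (r * (r + 1) / 2) := by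
  have h1 : Fintype.card (Key r) = ((r + 1) * (r + 1).factorial) * (2 ^ r * 2 ^ r) := by
    simp [Key, Fintype.card_perm]
  have h2 : (r + 1) * (r + 1).factorial ≤ (r + 2).factorial := by
    rw [Nat.factorial_succ (r + 1)]
    exact Nat.mul_le_mul_right _ (by omega)
  have h3 : 2 ^ r * 2 ^ r ≤ 3 * 2 ^ (r * (r + 1) / 2) := by
    rcases Nat.lt_or_ge r 3 with h | h
    · interval_cases r <;> norm_num
    · rw [← pow_add]
      have : r + r ≤ r * (r + 1) / 2 := by
        rw [Nat.le_div_iff_mul_le (by norm_num)]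
        nlinarith
      calc 2 ^ (r + r) ≤ 2 ^ (r * (r + 1) / 2) := Nat.pow_le_pow_right (by norm_num) this
        _ ≤ _ := by omega
  rw [h1]
  calc _ ≤ (r + 2).factorial * (3 * 2 ^ (r * (r + 1) / 2)) := Nat.mul_le_mul h2 h3
    _ = _ := by ring

/-- The structure of a graph whose initial segments have cut-rank at most `r`: a partition into few
classes, each of which carries a convex ultrametric that determines adjacency. -/
lemma exists_classes {G : SimpleGraph V} {r : ℕ} (h : ∀ v, cutRank G {x | x < v} ≤ r) :
    ∃ (κ : V → Key r) (d : V → V → ℕ) (lab : Key r → ℕ → Prop),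
      (∀ a b, d a b = d b a) ∧ (∀ a b, d a b ≤ r) ∧
      (∀ a b c, κ a = κ b → κ b = κ c → a < b → b < c → d a c = min (d a b) (d b c)) ∧
      (∀ a b, κ a = κ b → a < b → (G.Adj a b ↔ lab (κ a) (d a b))) := by
  have hr : ∀ w, (act G w).card ≤ r := fun w => act_card_le (h w)
  obtain ⟨col, hcol⟩ := exists_col hr
  choose p hp using exists_posn_perm hr hcol
  let κ : V → Key r := fun v =>
    ((⟨(act G v).card, Nat.lt_succ_of_le (hr v)⟩, p v),
      (fun i => decide (∃ x ∈ act G v, posn G v x = i ∧ G.Adj x v),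
        fun i => decide (bit G v (i + 1))))
  let lab : Key r → ℕ → Prop := fun k j => ∃ i : Fin r, j = i + 1 ∧ k.2.2 i = true
  have hle : ∀ a b, common G a b ≤ r := fun a b =>
    (Finset.card_le_card Finset.inter_subset_left).trans (hr a)
  have hlab : ∀ v j, j ≤ r → (lab (κ v) j ↔ bit G v j) := by
    intro v j hj
    constructor
    · rintro ⟨i, rfl, hi⟩
      simpa [κ] using hi
    · intro hb
      rcases j with _ | j
      · exact absurd hb (not_bit_zero G v)
      · exact ⟨⟨j, hj⟩, rfl, by simpa [κ] using hb⟩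
  have hsim : ∀ a b, κ a = κ b → Sim G a b := by
    intro a b hab
    simp only [κ, Prod.mk.injEq, Fin.mk.injEq, funext_iff, decide_eq_decide] at hab
    obtain ⟨⟨hk, hpp⟩, hN, -⟩ := hab
    have hpos : ∀ x ∈ act G a ∩ act G b, posn G a x = posn G b x := by
      intro x hx
      rw [Finset.mem_inter] at hx
      rw [← hp a x (Finset.mem_insert_of_mem hx.1), ← hp b x (Finset.mem_insert_of_mem hx.2), hpp]
    have key : ∀ v, ∀ x ∈ act G v, ∀ hi : posn G v x < r,
        ((∃ y ∈ act G v, posn G v y = (⟨posn G v x, hi⟩ : Fin r) ∧ G.Adj y v) ↔ G.Adj x v) := by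
      intro v x hx hi
      constructor
      · rintro ⟨y, hy, hyx, hadj⟩
        rwa [← posn_inj (Finset.mem_insert_of_mem hy) (Finset.mem_insert_of_mem hx) hyx]
      · exact fun hadj => ⟨x, hx, rfl, hadj⟩
    refine ⟨fun hmem => hcol b a hmem ?_, hpos, fun x hx => ?_⟩
    · apply (p b).injective
      apply Fin.ext
      rw [← hpp, hp a a (Finset.mem_insert_self _ _), hpp, hp b b (Finset.mem_insert_self _ _),
        posn_self, posn_self, hk]
    · have hx' := Finset.mem_inter.1 hx
      have hi : posn G a x < r :=
        (posn_lt hx'.1 (mem_act.1 hx'.1).1).trans_le ((posn_le_card G a a).trans (hr a))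
      rw [← key a x hx'.1 hi, hN]
      have hi' := hi
      rw [hpos x hx] at hi'
      rw [← key b x hx'.2 hi']
      simp only [hpos x hx]
  refine ⟨κ, common G, lab, fun a b => ?_, hle, ?_, ?_⟩
  · rw [common, common, Finset.inter_comm]
  · intro a b c _ hbc h1 h2
    exact common_min h1 h2 (hsim b c hbc)
  · intro a b hab h1
    rw [hlab a _ (hle a b)]
    exact adj_iff_bit h1 (hsim a b hab)

/-! ### Colouring by clique heights -/

/-- If adjacency inside each class is transitive along the order, the sizes of the largest cliques
of the class ending at a given vertex properly colour the class. -/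
lemma colorable_of_trans {G : SimpleGraph V} {K : Type} [Fintype K] (κ : V → K)
    (htr : ∀ a b c, κ a = κ b → κ b = κ c → a < b → b < c → G.Adj a b → G.Adj b c →
      G.Adj a c) :
    G.Colorable (Fintype.card K * G.cliqueNum) := by
  let S : V → Finset (Finset V) := fun v => Finset.univ.filter fun s =>
    v ∈ s ∧ (∀ x ∈ s, x ≤ v ∧ κ x = κ v) ∧ G.IsClique (s : Set V)
  let ht : V → ℕ := fun v => (S v).sup Finset.card
  have hS : ∀ v, {v} ∈ S v := by intro v; simp [S]
  have hpos : ∀ v, 0 < ht v := fun v =>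
    lt_of_lt_of_le (by simp) (Finset.le_sup (f := Finset.card) (hS v))
  have hle : ∀ v, ht v ≤ G.cliqueNum := by
    intro v
    refine Finset.sup_le fun s hs => ?_
    simp only [S, Finset.mem_filter, Finset.mem_univ, true_and] at hs
    exact SimpleGraph.IsClique.card_le_cliqueNum (tc := hs.2.2)
  have hmono : ∀ u v, u < v → κ u = κ v → G.Adj u v → ht u < ht v := by
    intro u v huv hκ hadj
    obtain ⟨s, hs, hsu⟩ := Finset.exists_mem_eq_sup (S u) ⟨_, hS u⟩ Finset.card
    simp only [S, Finset.mem_filter, Finset.mem_univ, true_and] at hs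
    obtain ⟨hus, hsx, hcl⟩ := hs
    have hvs : v ∉ s := fun h => absurd (hsx v h).1 (not_le_of_gt huv)
    have hmem : insert v s ∈ S v := by
      simp only [S, Finset.mem_filter, Finset.mem_univ, true_and]
      refine ⟨Finset.mem_insert_self _ _, ?_, ?_⟩
      · intro x hx
        rcases Finset.mem_insert.1 hx with rfl | hx
        · exact ⟨le_rfl, rfl⟩
        · exact ⟨(hsx x hx).1.trans huv.le, (hsx x hx).2.trans hκ⟩
      · rw [Finset.coe_insert, SimpleGraph.isClique_insert_of_notMem (by simpa using hvs)]
        refine ⟨hcl, fun x hx => ?_⟩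
        rcases eq_or_ne x u with rfl | hxu
        · exact hadj.symm
        · exact (htr x u v (hsx x hx).2 hκ (lt_of_le_of_ne (hsx x hx).1 hxu) huv
            (hcl hx hus hxu) hadj).symm
    have := Finset.le_sup (f := Finset.card) hmem
    rw [Finset.card_insert_of_notMem hvs] at this
    change (S u).sup Finset.card < (S v).sup Finset.card
    omega
  let c : V → K × Fin G.cliqueNum := fun v =>
    (κ v, ⟨ht v - 1, by have := hpos v; have := hle v; omega⟩)
  have hc : ∀ {u v}, G.Adj u v → c u ≠ c v := by
    intro u v hadj h
    simp only [c, Prod.mk.injEq, Fin.mk.injEq] at h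
    have h1 := hpos u
    have h2 := hpos v
    rcases lt_or_gt_of_ne hadj.ne with h3 | h3
    · have := hmono u v h3 h.1 hadj
      omega
    · have := hmono v u h3 h.1.symm hadj.symm
      omega
  simpa using (SimpleGraph.Coloring.mk c hc).colorable

end Order

/-! ### Cotrees from ultrametrics -/

section Tree

variable {α : Type} {d : α → α → ℕ} {r : ℕ}

/-- The equivalence relation on pairs (level, leaf) whose classes are the balls of the ultrametric
`d`, for levels `0, …, r + 1`. -/
def ballSetoid (d : α → α → ℕ) (r : ℕ) (hsymm : ∀ a b, d a b = d b a)
    (hult : ∀ a b c, a ≠ b → b ≠ c → a ≠ c → min (d a b) (d b c) ≤ d a c) :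
    Setoid (Fin (r + 2) × α) where
  r p q := p.1 = q.1 ∧ (p.2 = q.2 ∨ (p.1 : ℕ) ≤ d p.2 q.2)
  iseqv := by
    refine ⟨fun p => ⟨rfl, Or.inl rfl⟩, ?_, ?_⟩
    · rintro ⟨i, a⟩ ⟨j, b⟩ ⟨h1, h2⟩
      dsimp only at h1 h2 ⊢
      subst h1
      exact ⟨rfl, h2.imp Eq.symm fun h => by rwa [hsymm]⟩
    · rintro ⟨i, a⟩ ⟨j, b⟩ ⟨k, c⟩ ⟨h1, h2⟩ ⟨h3, h4⟩
      dsimp only at h1 h2 h3 h4 ⊢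
      subst h1 h3
      refine ⟨rfl, ?_⟩
      by_cases hab : a = b
      · subst hab; exact h4
      by_cases hbc : b = c
      · subst hbc; exact h2
      by_cases hac : a = c
      · exact Or.inl hac
      · have := hult a b c hab hbc hac
        right
        have h5 := h2.resolve_left hab
        have h6 := h4.resolve_left hbc
        exact (le_min h5 h6).trans this

/-- The nodes of the cotree are the balls of the ultrametric, at levels `0, …, r + 1`; the label of a
node depends on its level only, and the least common ancestor of `a` and `b` has level `d a b`. -/
lemma exists_cotree [Finite α] [Nonempty α] (H : SimpleGraph α) (lab : ℕ → Prop)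
    (hsymm : ∀ a b, d a b = d b a) (hle : ∀ a b, d a b ≤ r)
    (hult : ∀ a b c, a ≠ b → b ≠ c → a ≠ c → min (d a b) (d b c) ≤ d a c)
    (hadj : ∀ a b, a ≠ b → (H.Adj a b ↔ lab (d a b))) :
    ∃ T : Cotree H, T.depthLE (r + 2) := by
  let s := ballSetoid d r hsymm hult
  have hrel : ∀ {i j : Fin (r + 2)} {a b : α}, (Quotient.mk s (i, a) = Quotient.mk s (j, b)) ↔
      i = j ∧ (a = b ∨ (i : ℕ) ≤ d a b) := fun {i j a b} => Quotient.eq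
  let dn : ℕ → Fin (r + 2) → Fin (r + 2) := fun k i => ⟨i - k, by omega⟩
  let par : Quotient s → Quotient s := Quotient.map (fun p => (dn 1 p.1, p.2)) (by
    rintro ⟨i, a⟩ ⟨j, b⟩ ⟨h1, h2⟩
    dsimp only at h1 h2
    subst h1
    exact ⟨rfl, h2.imp id fun h => le_trans (Nat.sub_le _ _) h⟩)
  have hpar : ∀ i a, par (Quotient.mk s (i, a)) = Quotient.mk s (dn 1 i, a) := fun _ _ => rfl
  have hiter : ∀ k i a, par^[k] (Quotient.mk s (i, a)) = Quotient.mk s (dn k i, a) := by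
    intro k
    induction k with
    | zero => intro i a; rfl
    | succ k ih =>
      intro i a
      rw [Function.iterate_succ_apply, hpar, ih]
      have : dn k (dn 1 i) = dn (k + 1) i := by
        apply Fin.ext; simp only [dn]; omega
      rw [this]
  let a₀ : α := Classical.arbitrary α
  let root : Quotient s := Quotient.mk s (0, a₀)
  have hroot : ∀ a, Quotient.mk s (0, a) = root := fun a => hrel.2 ⟨rfl, Or.inr (Nat.zero_le _)⟩
  let lst : Fin (r + 2) := Fin.last (r + 1)
  have hreach : ∀ (i : Fin (r + 2)) (a : α), par^[(i : ℕ)] (Quotient.mk s (i, a)) = root := by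
    intro i a
    rw [hiter, ← hroot a]
    congr 2
    apply Fin.ext; simp [dn]
  let leaf : α ↪ Quotient s := ⟨fun a => Quotient.mk s (lst, a), by
    intro a b hab
    rcases (hrel.1 hab).2 with h | h
    · exact h
    · have := hle a b
      simp only [lst, Fin.val_last] at h
      omega⟩
  let label : Quotient s → Bool := Quotient.lift (fun p => decide (lab (p.1 : ℕ))) (by
    rintro ⟨i, a⟩ ⟨j, b⟩ ⟨h1, -⟩
    dsimp only at h1
    subst h1
    rfl)
  refine ⟨{ W := Quotient s, fintypeW := Fintype.ofFinite _, root := root, par := par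
            par_root := ?_, reaches_root := ?_, leafEmb := leaf, leaf_iff := ?_
            label := label, adj_iff := ?_ }, ?_⟩
  · rw [hpar]
    exact hroot a₀
  · intro w
    induction w using Quotient.inductionOn with | _ p => exact ⟨_, hreach p.1 p.2⟩
  · intro w
    induction w using Quotient.inductionOn with | _ p =>
    obtain ⟨i, a⟩ := p
    constructor
    · intro hw
      rcases Fin.lt_or_eq_of_le (Fin.le_last i) with hi | hi
      · exfalso
        have hi' : (i : ℕ) < r + 1 := hi
        have h1 := hw (Quotient.mk s (⟨i + 1, by omega⟩, a)) (by
          rw [hpar]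
          congr 2)
        have := congrArg Fin.val (hrel.1 h1).1
        simp at this
      · exact ⟨a, by rw [hi]; rfl⟩
    · rintro ⟨b, hb⟩ w' hw'
      exfalso
      have hil : lst = i := (hrel.1 hb).1
      induction w' using Quotient.inductionOn with | _ q =>
      obtain ⟨j, c⟩ := q
      rw [hpar] at hw'
      have h1 := congrArg Fin.val (hrel.1 hw').1
      rw [← hil] at h1
      simp only [dn, lst, Fin.val_last] at h1
      omega
  · intro a b hab x hx
    obtain ⟨⟨k, hk⟩, ⟨l, hl⟩, hlca⟩ := hx
    change par^[k] (Quotient.mk s (lst, a)) = x at hk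
    change par^[l] (Quotient.mk s (lst, b)) = x at hl
    rw [hiter] at hk hl
    have hkl := hrel.1 (hk.trans hl.symm)
    have hup : ((dn k lst : Fin (r + 2)) : ℕ) ≤ d a b := hkl.2.resolve_left hab
    have hdr := hle a b
    have hbig : par^[r + 1 - d a b] (Quotient.mk s (lst, a)) =
        par^[r + 1 - d a b] (Quotient.mk s (lst, b)) := by
      rw [hiter, hiter]
      refine hrel.2 ⟨rfl, Or.inr ?_⟩
      simp only [dn, lst, Fin.val_last]
      omega
    obtain ⟨m, hm⟩ := hlca (par^[r + 1 - d a b] (Quotient.mk s (lst, a))) ⟨_, rfl⟩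
      ⟨_, hbig.symm⟩
    rw [← hk, hiter, hiter] at hm
    have hlow := congrArg Fin.val (hrel.1 hm).1
    simp only [dn, lst, Fin.val_last] at hlow hup
    have hlev : ((dn k lst : Fin (r + 2)) : ℕ) = d a b := by
      simp only [dn, lst, Fin.val_last]
      omega
    rw [hadj a b hab, ← hk]
    change lab (d a b) ↔ decide (lab ((dn k lst : Fin (r + 2)) : ℕ)) = true
    rw [hlev, decide_eq_true_iff]
  · intro a
    unfold pathNodes
    have : sInf {k : ℕ | par^[k] (leaf a) = root} ≤ r + 1 := Nat.sInf_le (hreach lst a)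
    change sInf {k : ℕ | par^[k] (leaf a) = root} + 1 ≤ r + 2
    omega

end Tree

/-! ### The partition theorem -/

lemma exists_enumeration {V : Type} [Fintype V] {r : ℕ} {G : SimpleGraph V} (h : lrw G ≤ r) :
    ∃ e : Fin (Fintype.card V) ≃ V, ∀ i : ℕ, cutRank G (e '' {j | (j : ℕ) < i}) ≤ r := by
  have hne : { r | ∃ e : Fin (Fintype.card V) ≃ V,
      ∀ i : ℕ, cutRank G (e '' {j | (j : ℕ) < i}) ≤ r }.Nonempty := by
    refine ⟨Fintype.card V, (Fintype.equivFin V).symm, fun i => ?_⟩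
    exact (Matrix.rank_le_card_height _).trans (Fintype.card_subtype_le _)
  obtain ⟨e, he⟩ := Nat.sInf_mem hne
  exact ⟨e, fun i => (he i).trans h⟩

/-- The identity for ordered triples gives the ultrametric inequality for all triples. -/
lemma ultrametric_of_convex {V : Type} [LinearOrder V] {d : V → V → ℕ} {P : V → Prop}
    (hsymm : ∀ a b, d a b = d b a)
    (hmin : ∀ a b c, P a → P b → P c → a < b → b < c → d a c = min (d a b) (d b c))
    {a b c : V} (ha : P a) (hb : P b) (hc : P c) (hab : a ≠ b) (hbc : b ≠ c) (hac : a ≠ c) :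
    min (d a b) (d b c) ≤ d a c := by
  have s1 := hsymm a b
  have s2 := hsymm b c
  have s3 := hsymm a c
  rcases lt_or_gt_of_ne hab with h1 | h1 <;> rcases lt_or_gt_of_ne hbc with h2 | h2 <;>
    rcases lt_or_gt_of_ne hac with h3 | h3
  · have := hmin a b c ha hb hc h1 h2; omega
  · exact absurd (h1.trans h2) (not_lt_of_gt h3)
  · have := hmin a c b ha hc hb h3 h2; omega
  · have := hmin c a b hc ha hb h3 h1; omega
  · have := hmin b a c hb ha hc h1 h3; omega
  · have := hmin b c a hb hc ha h2 h3; omega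
  · exact absurd (h2.trans h1) (not_lt_of_gt h3)
  · have := hmin c b a hc hb ha h2 h1; omega

/-- Every finite graph of linear rankwidth at most `r` admits a partition of its vertex set into
at most `3·(r+2)!·2^{r(r+1)/2}` parts, each inducing a cograph with a cotree of depth at most
`r+2`; in particular `χ(G) ≤ 3·(r+2)!·2^{r(r+1)/2}·ω(G)`. -/
theorem lrw_partition_cographs {V : Type} [Fintype V] (r : ℕ) (G : SimpleGraph V)
    (h : lrw G ≤ r) :
    (∃ m : ℕ, m ≤ 3 * Nat.factorial (r + 2) * 2 ^ (r * (r + 1) / 2) ∧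
      ∃ c : V → Fin m, Function.Surjective c ∧
        ∀ i : Fin m, ∃ T : Cotree (SimpleGraph.induce {x : V | c x = i} G),
          T.depthLE (r + 2)) ∧
    G.chromaticNumber ≤
      ((3 * Nat.factorial (r + 2) * 2 ^ (r * (r + 1) / 2) * G.cliqueNum : ℕ) : ℕ∞) := by
  obtain ⟨e, he⟩ := exists_enumeration h
  let _ : LinearOrder V := LinearOrder.lift' e.symm e.symm.injective
  have hcut : ∀ v : V, cutRank G {x | x < v} ≤ r := by
    intro v
    have hset : {x : V | x < v} = e '' {j | (j : ℕ) < (e.symm v : ℕ)} := by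
      ext x
      constructor
      · intro hx
        exact ⟨e.symm x, hx, e.apply_symm_apply x⟩
      · rintro ⟨j, hj, rfl⟩
        change e.symm (e j) < e.symm v
        rw [e.symm_apply_apply]
        exact hj
    rw [hset]
    exact he _
  obtain ⟨κ, d, lab, hsymm, hle, hmin, hadj⟩ := exists_classes hcut
  constructor
  · let I : Finset (Key r) := Finset.univ.image κ
    refine ⟨I.card, (Finset.card_le_univ I).trans (card_key_le r),
      fun v => I.equivFin ⟨κ v, Finset.mem_image_of_mem κ (Finset.mem_univ v)⟩, ?_, ?_⟩
    · intro i
      obtain ⟨v, -, hv⟩ := Finset.mem_image.1 (I.equivFin.symm i).2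
      refine ⟨v, ?_⟩
      rw [← I.equivFin.apply_symm_apply i]
      exact congrArg _ (Subtype.ext hv)
    · intro i
      set k := I.equivFin.symm i with hk
      have hcls : ∀ x : V, I.equivFin ⟨κ x, Finset.mem_image_of_mem κ (Finset.mem_univ x)⟩ = i →
          κ x = k := by
        intro x hx
        rw [hk, ← hx, Equiv.symm_apply_apply]
      obtain ⟨v, -, hv⟩ := Finset.mem_image.1 k.2
      have : Nonempty {x : V | I.equivFin
          ⟨κ x, Finset.mem_image_of_mem κ (Finset.mem_univ x)⟩ = i} := by
        refine ⟨v, ?_⟩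
        rw [Set.mem_ofPred_eq, ← Equiv.eq_symm_apply]
        exact Subtype.ext hv
      refine exists_cotree (d := fun a b => d a.1 b.1) _ (lab k) (fun a b => hsymm _ _)
        (fun a b => hle _ _) ?_ ?_
      · intro a b c hab hbc hac
        exact ultrametric_of_convex (P := fun x => κ x = k) hsymm
          (fun a b c ha hb hc => hmin a b c (ha.trans hb.symm) (hb.trans hc.symm))
          (hcls _ a.2) (hcls _ b.2) (hcls _ c.2) (fun h => hab (Subtype.ext h))
          (fun h => hbc (Subtype.ext h)) (fun h => hac (Subtype.ext h))
      · intro a b hab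
        have ha := hcls _ a.2
        have hb := hcls _ b.2
        rw [SimpleGraph.comap_adj]
        change G.Adj a.1 b.1 ↔ _
        rcases lt_or_gt_of_ne (fun h => hab (Subtype.ext h) : a.1 ≠ b.1) with h1 | h1
        · rw [hadj _ _ (ha.trans hb.symm) h1, ha]
        · rw [G.adj_comm, hadj _ _ (hb.trans ha.symm) h1, hb, hsymm]
  · refine le_trans (colorable_of_trans κ ?_).chromaticNumber_le
      (Nat.cast_le.2 (Nat.mul_le_mul_right _ (card_key_le r)))
    intro a b c hab hbc h1 h2 h3 h4
    rw [hadj a b hab h1] at h3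
    rw [hadj b c hbc h2, ← hab] at h4
    rw [hadj a c (hab.trans hbc) (h1.trans h2), hmin a b c hab hbc h1 h2]
    rcases min_choice (d a b) (d b c) with h5 | h5 <;> rw [h5] <;> assumption
end

section
/- For all integers n ≥ 1 and r ≥ 0, the number of isomorphism classes of finite simple graphs on n vertices with linear rankwidth at most r is at most ((r+2)! · 2^{r(r−1)/2} · 3^{r+2})^n. -/
/-!
Fix an enumeration `v₀, …, vₙ₋₁` of a graph in which every initial segment has cut-rank at most
`r`, and write `R k` for the span over `GF(2)` of the rows of `v₀, …, vₖ₋₁` truncated to the columns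
`vₖ, …, vₙ₋₁`. Since `dim R k ≤ r`, the space `R k` is spanned by `r` vectors, that is, it is
the image of a linear map `W k` from `GF(2)^r`, and each earlier vertex `x` gets a coordinate vector
`c k x` with `W k (c k x)` the truncated row of `x`. The adjacency of `x` to `vₖ` is then the dot
product of `c k x` with the vector `a k` listing the `vₖ`-entries of the `r` spanning vectors.

When `vₖ` is added, the `r` truncated spanning vectors together with the row of `vₖ` are `r + 1`
vectors in `R (k + 1)`, so there is a nonzero dependency `d k` among them. Dividing
`GF(2)^(r+1)` by the line through `d k` and identifying the quotient with `GF(2)^r` by an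
isomorphism chosen in terms of `d k` only gives the new coordinates (`reduceMap`, `coords`). Hence
the pairs `(a k, d k)`, for `k < n`, determine the graph up to isomorphism (`exists_code`,
`exists_code_of_lrw_le`). There are at most `2^r · 2^(r+1)` such pairs, which is at most
`(r+2)! · 2^{r(r-1)/2} · 3^{r+2}`.
-/

open scoped Classical

/-- For `d ≠ 0`, some linear map with kernel contained in the line through `d`, chosen as a
function of `d` alone; the junk value is `0` when no such map exists. The index `none` is the
coordinate of the newly added vertex. -/
noncomputable def reduceMap {r : ℕ} (d : Option (Fin r) → ZMod 2) :
    (Option (Fin r) → ZMod 2) →ₗ[ZMod 2] (Fin r → ZMod 2) :=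
  if h : ∃ L : (Option (Fin r) → ZMod 2) →ₗ[ZMod 2] (Fin r → ZMod 2),
      LinearMap.ker L ≤ Submodule.span (ZMod 2) {d} then h.choose else 0

lemma reduceMap_ker {r : ℕ} {d : Option (Fin r) → ZMod 2} (hd : d ≠ 0) :
    LinearMap.ker (reduceMap d) ≤ Submodule.span (ZMod 2) {d} := by
  have h : ∃ L : (Option (Fin r) → ZMod 2) →ₗ[ZMod 2] (Fin r → ZMod 2),
      LinearMap.ker L ≤ Submodule.span (ZMod 2) {d} := by
    have h1 := Submodule.finrank_quotient_add_finrank (Submodule.span (ZMod 2) {d})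
    rw [finrank_span_singleton hd] at h1
    have h2 : Module.finrank (ZMod 2) ((Option (Fin r) → ZMod 2) ⧸ Submodule.span (ZMod 2) {d})
        = Module.finrank (ZMod 2) (Fin r → ZMod 2) := by
      simp at h1 ⊢
      omega
    let E := LinearEquiv.ofFinrankEq _ _ h2
    refine ⟨E.toLinearMap ∘ₗ (Submodule.span (ZMod 2) {d}).mkQ, ?_⟩
    rw [LinearEquiv.ker_comp, Submodule.ker_mkQ]
  rw [reduceMap, dif_pos h]
  exact h.choose_spec

/-- Padding a coordinate vector with `0` at the coordinate of the new vertex. -/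
def padZero (r : ℕ) : (Fin r → ZMod 2) →ₗ[ZMod 2] (Option (Fin r) → ZMod 2) where
  toFun c o := o.elim 0 c
  map_add' c c' := by ext o; cases o <;> simp
  map_smul' t c := by ext o; cases o <;> simp

/-- The coordinate vector of the vertex `x` at time `k`, computed from the dependencies `d` alone.
Only the values at `x < k` are meaningful; a vertex enters as the unit vector at `none`. -/
noncomputable def coords {n r : ℕ} (d : ℕ → Option (Fin r) → ZMod 2) :
    ℕ → Fin n → Fin r → ZMod 2
  | 0 => fun _ => 0
  | k + 1 => fun x => reduceMap (d k)
      (if (x : ℕ) < k then padZero r (coords d k x) else Pi.single none 1)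

lemma coords_congr {n r : ℕ} {d d' : ℕ → Option (Fin r) → ZMod 2} (k : ℕ)
    (h : ∀ m < k, d m = d' m) : (coords d k : Fin n → _) = coords d' k := by
  induction k with
  | zero => rfl
  | succ k ih =>
    funext x
    simp only [coords, h k (Nat.lt_succ_self k), ih fun m hm => h m (by omega)]

/-- Truncation of a row to the columns `k, k + 1, …`. -/
def truncRow (n k : ℕ) : (Fin n → ZMod 2) →ₗ[ZMod 2] (Fin n → ZMod 2) where
  toFun g y := if k ≤ (y : ℕ) then g y else 0
  map_add' g g' := by ext y; by_cases h : k ≤ (y : ℕ) <;> simp [h]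
  map_smul' t g := by ext y; by_cases h : k ≤ (y : ℕ) <;> simp [h]

lemma truncRow_succ (n k : ℕ) (g : Fin n → ZMod 2) :
    truncRow n (k + 1) (truncRow n k g) = truncRow n (k + 1) g := by
  ext y
  simp only [truncRow, LinearMap.coe_mk, AddHom.coe_mk]
  split_ifs <;> first | rfl | omega

/-- The span of the truncated rows of the first `k` vertices. -/
def rowSpan {n : ℕ} (A : Fin n → Fin n → ZMod 2) (k : ℕ) : Submodule (ZMod 2) (Fin n → ZMod 2) :=
  Submodule.span (ZMod 2) ((fun x => truncRow n k (A x)) '' {x : Fin n | (x : ℕ) < k})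

/-- One step of the encoding: if the truncated rows of the first `k` vertices are the images under
`W` of their coordinates, a dependency `δ` can be chosen so that the same holds for the first
`k + 1` vertices and the coordinates reduced along `δ`. -/
lemma exists_step {n r k : ℕ} {A : Fin n → Fin n → ZMod 2} (hk : k < n)
    (hA : Module.finrank (ZMod 2) (rowSpan A (k + 1)) ≤ r)
    (W : (Fin r → ZMod 2) →ₗ[ZMod 2] (Fin n → ZMod 2))
    (hW : ∀ z, W z ∈ rowSpan A k) (c : Fin n → Fin r → ZMod 2)
    (hc : ∀ x : Fin n, (x : ℕ) < k → W (c x) = truncRow n k (A x)) :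
    ∃ (δ : Option (Fin r) → ZMod 2) (W' : (Fin r → ZMod 2) →ₗ[ZMod 2] (Fin n → ZMod 2)),
      (∀ z, W' z ∈ rowSpan A (k + 1)) ∧
      ∀ x : Fin n, (x : ℕ) < k + 1 →
        W' (reduceMap δ (if (x : ℕ) < k then padZero r (c x) else Pi.single none 1)) =
          truncRow n (k + 1) (A x) := by
  have htr : ∀ g ∈ rowSpan A k, truncRow n (k + 1) g ∈ rowSpan A (k + 1) := by
    intro g hg
    have : rowSpan A k ≤ (rowSpan A (k + 1)).comap (truncRow n (k + 1)) := by
      refine Submodule.span_le.2 ?_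
      rintro _ ⟨x, hx, rfl⟩
      simp only [Submodule.comap_coe, Set.mem_preimage, truncRow_succ]
      exact Submodule.subset_span ⟨x, Nat.lt_succ_of_lt hx, rfl⟩
    exact this hg
  have hnew : truncRow n (k + 1) (A ⟨k, hk⟩) ∈ rowSpan A (k + 1) :=
    Submodule.subset_span ⟨⟨k, hk⟩, Nat.lt_succ_self k, rfl⟩
  -- The `r + 1` vectors: the truncated old spanning vectors and the row of the vertex `k`.
  let F : (Option (Fin r) → ZMod 2) →ₗ[ZMod 2] (Fin n → ZMod 2) :=
    truncRow n (k + 1) ∘ₗ W ∘ₗ LinearMap.funLeft (ZMod 2) (ZMod 2) some +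
      (LinearMap.proj none).smulRight (truncRow n (k + 1) (A ⟨k, hk⟩))
  have hF : ∀ p, F p ∈ rowSpan A (k + 1) := fun p =>
    Submodule.add_mem _ (htr _ (hW _)) (Submodule.smul_mem _ _ hnew)
  let F' := F.codRestrict (rowSpan A (k + 1)) hF
  have hker : LinearMap.ker F' ≠ ⊥ := by
    refine LinearMap.ker_ne_bot_of_finrank_lt ?_
    simp
    omega
  obtain ⟨δ, hδ, hδ0⟩ := Submodule.exists_mem_ne_zero_of_ne_bot hker
  have hle : LinearMap.ker (reduceMap δ) ≤ LinearMap.ker F' :=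
    (reduceMap_ker hδ0).trans ((Submodule.span_singleton_le_iff_mem _ _).2 hδ)
  obtain ⟨W', hW'⟩ : ∃ W' : (Fin r → ZMod 2) →ₗ[ZMod 2] rowSpan A (k + 1),
      W' ∘ₗ reduceMap δ = F' := by
    obtain ⟨W', hW'⟩ := LinearMap.exists_extend
      (((LinearMap.ker (reduceMap δ)).liftQ F' hle) ∘ₗ
        (reduceMap δ).quotKerEquivRange.symm.toLinearMap)
    refine ⟨W', LinearMap.ext fun p => ?_⟩
    have h1 := LinearMap.congr_fun hW' ⟨reduceMap δ p, LinearMap.mem_range_self _ p⟩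
    have h2 : (reduceMap δ).quotKerEquivRange.symm
        ⟨reduceMap δ p, LinearMap.mem_range_self _ p⟩ = Submodule.Quotient.mk p := by
      rw [LinearEquiv.symm_apply_eq]
      rfl
    simp only [LinearMap.comp_apply, LinearEquiv.coe_coe, h2] at h1
    exact h1
  have hval : ∀ p, (W' (reduceMap δ p) : Fin n → ZMod 2) = F p := fun p =>
    congrArg Subtype.val (LinearMap.congr_fun hW' p)
  refine ⟨δ, (rowSpan A (k + 1)).subtype ∘ₗ W', fun z => (W' z).2, fun x hx => ?_⟩
  rw [LinearMap.comp_apply, Submodule.subtype_apply, hval]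
  split_ifs with hxk
  · have h1 : LinearMap.funLeft (ZMod 2) (ZMod 2) some (padZero r (c x)) = c x := rfl
    have h2 : padZero r (c x) none = 0 := rfl
    simp [F, h1, h2, hc x hxk, truncRow_succ]
  · have h1 : LinearMap.funLeft (ZMod 2) (ZMod 2) some
        (Pi.single none 1 : Option (Fin r) → ZMod 2) = 0 := by
      ext s
      simp [LinearMap.funLeft_apply]
    have h2 : x = ⟨k, hk⟩ := Fin.ext (by simp only; omega)
    simp [F, h1, h2]

/-- If every truncated row space has dimension at most `r`, the entries of `A` above the diagonal
are dot products of vectors `a m` with coordinates computed from the dependencies `d`. -/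
lemma exists_code {n r : ℕ} {A : Fin n → Fin n → ZMod 2}
    (hA : ∀ k, Module.finrank (ZMod 2) (rowSpan A k) ≤ r) :
    ∃ (d : ℕ → Option (Fin r) → ZMod 2) (a : ℕ → Fin r → ZMod 2),
      ∀ x m : Fin n, x < m → A x m = ∑ s, coords d m x s * a m s := by
  have main : ∀ k ≤ n, ∃ (d : ℕ → Option (Fin r) → ZMod 2) (a : ℕ → Fin r → ZMod 2)
      (W : (Fin r → ZMod 2) →ₗ[ZMod 2] (Fin n → ZMod 2)),
      (∀ z, W z ∈ rowSpan A k) ∧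
      (∀ x : Fin n, (x : ℕ) < k → W (coords d k x) = truncRow n k (A x)) ∧
      ∀ x m : Fin n, x < m → (m : ℕ) < k → A x m = ∑ s, coords d m x s * a m s := by
    intro k
    induction k with
    | zero =>
      intro _
      exact ⟨0, 0, 0, fun z => Submodule.zero_mem _, fun x hx => absurd hx (by omega),
        fun x m _ hm => absurd hm (by omega)⟩
    | succ k ih =>
      intro hk
      obtain ⟨d, a, W, hW, hc, hcode⟩ := ih (by omega)
      obtain ⟨δ, W', hW', hc'⟩ := exists_step hk (hA (k + 1)) W hW _ hc
      have hcongr : ∀ m ≤ k, (coords (Function.update d k δ) m : Fin n → _) = coords d m :=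
        fun m hm => coords_congr m fun j hj => Function.update_of_ne (by omega) _ _
      refine ⟨Function.update d k δ,
        Function.update a k (fun s => W (Pi.single s 1) ⟨k, hk⟩), W', hW', fun x hx => ?_,
        fun x m hxm hm => ?_⟩
      · rw [← hc' x hx]
        simp only [coords, hcongr k le_rfl, Function.update_self]
      · rw [hcongr m (by omega)]
        rcases Nat.lt_succ_iff_lt_or_eq.1 hm with hm | hm
        · rw [Function.update_of_ne (by omega)]
          exact hcode x m hxm hm
        · obtain rfl : m = ⟨k, hk⟩ := Fin.ext hm
          have h1 := congrFun (hc x hxm) ⟨k, hk⟩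
          rw [LinearMap.pi_apply_eq_sum_univ W] at h1
          simp only [truncRow, LinearMap.coe_mk, AddHom.coe_mk, le_refl, if_true] at h1
          rw [← h1, Finset.sum_apply]
          simp only [Function.update_self]
          refine Finset.sum_congr rfl fun s _ => ?_
          rw [Pi.smul_apply, smul_eq_mul]
          have hsingle : (fun j => if s = j then (1 : ZMod 2) else 0) = Pi.single s 1 := by
            ext j
            simp [Pi.single_apply, eq_comm]
          rw [← hsingle]
  obtain ⟨d, a, -, -, -, h⟩ := main n le_rfl
  exact ⟨d, a, fun x m hxm => h x m hxm m.2⟩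

/-- The adjacency matrix of `G` over the two-element field, in the order given by `e`. -/
noncomputable def adjRow {n : ℕ} (G : SimpleGraph (Fin n)) (e : Fin n ≃ Fin n) :
    Fin n → Fin n → ZMod 2 :=
  fun x y => if G.Adj (e x) (e y) then 1 else 0

lemma finrank_rowSpan_le {n : ℕ} (G : SimpleGraph (Fin n)) (e : Fin n ≃ Fin n) (k : ℕ) :
    Module.finrank (ZMod 2) (rowSpan (adjRow G e) k) ≤ cutRank G (e '' {j | (j : ℕ) < k}) := by
  set X : Set (Fin n) := e '' {j | (j : ℕ) < k} with hX
  have hmem : ∀ y : Fin n, k ≤ (y : ℕ) → e y ∈ Xᶜ := by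
    rintro y hy ⟨z, hz, hzy⟩
    rw [e.injective hzy] at hz
    exact absurd hz (not_lt.2 hy)
  -- Extension by zero, from rows indexed by the complement of the initial segment.
  let φ : ((↥(Xᶜ)) → ZMod 2) →ₗ[ZMod 2] (Fin n → ZMod 2) :=
    { toFun := fun g y => if h : k ≤ (y : ℕ) then g ⟨e y, hmem y h⟩ else 0
      map_add' := fun g g' => by ext y; by_cases h : k ≤ (y : ℕ) <;> simp [h]
      map_smul' := fun t g => by ext y; by_cases h : k ≤ (y : ℕ) <;> simp [h] }
  rw [cutRank, Matrix.rank_eq_finrank_span_row]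
  refine le_trans (Submodule.finrank_mono ?_) (Submodule.finrank_map_le φ _)
  refine Submodule.span_le.2 ?_
  rintro _ ⟨x, hx, rfl⟩
  refine ⟨_, Submodule.subset_span ⟨⟨e x, x, hx, rfl⟩, rfl⟩, ?_⟩
  ext y
  by_cases h : k ≤ (y : ℕ) <;> simp [φ, truncRow, adjRow, h, Matrix.row]

lemma exists_order {n r : ℕ} {G : SimpleGraph (Fin n)} (hG : lrw G ≤ r) :
    ∃ e : Fin n ≃ Fin n, ∀ i : ℕ, cutRank G (e '' {j | (j : ℕ) < i}) ≤ r := by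
  have hne : { r | ∃ e : Fin (Fintype.card (Fin n)) ≃ Fin n,
      ∀ i : ℕ, cutRank G (e '' {j | (j : ℕ) < i}) ≤ r }.Nonempty := by
    refine ⟨n, finCongr (Fintype.card_fin n), fun i => ?_⟩
    refine (Matrix.rank_le_card_height _).trans ?_
    exact (Fintype.card_subtype_le _).trans (Fintype.card_fin n).le
  obtain ⟨e, he⟩ := Nat.sInf_mem hne
  refine ⟨(finCongr (Fintype.card_fin n).symm).trans e, fun i => ?_⟩
  have himg : ((finCongr (Fintype.card_fin n).symm).trans e) '' {j : Fin n | (j : ℕ) < i} =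
      e '' {j | (j : ℕ) < i} := by
    ext v
    constructor
    · rintro ⟨j, hj, rfl⟩
      exact ⟨finCongr (Fintype.card_fin n).symm j, hj, rfl⟩
    · rintro ⟨j, hj, rfl⟩
      exact ⟨finCongr (Fintype.card_fin n) j, hj, rfl⟩
  rw [himg]
  exact (he i).trans hG

/-- Every graph of linear rankwidth at most `r` is, in a suitable order of its vertices, the
graph decoded from `n` pairs of a vector and a dependency. -/
lemma exists_code_of_lrw_le {n r : ℕ} {G : SimpleGraph (Fin n)} (hG : lrw G ≤ r) :
    ∃ (t : Fin n → (Fin r → ZMod 2) × (Option (Fin r) → ZMod 2)) (e : Fin n ≃ Fin n),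
      ∀ x m : Fin n, x < m → (G.Adj (e x) (e m) ↔
        ∑ s, coords (fun k => if h : k < n then (t ⟨k, h⟩).2 else 0) m x s * (t m).1 s = 1) := by
  obtain ⟨e, he⟩ := exists_order hG
  obtain ⟨d, a, h⟩ := exists_code fun k => (finrank_rowSpan_le G e k).trans (he k)
  refine ⟨fun k => (a k, d k), e, fun x m hxm => ?_⟩
  have hcongr : (coords (fun k => if h : k < n then d k else 0) m : Fin n → _) = coords d m :=
    coords_congr m fun j hj => dif_pos (hj.trans m.2)
  simp only [hcongr, ← h x m hxm, adjRow]
  split_ifs with hadj <;> simp [hadj]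

lemma code_card_le (r : ℕ) :
    2 ^ r * 2 ^ (r + 1) ≤ Nat.factorial (r + 2) * 2 ^ (r * (r - 1) / 2) * 3 ^ (r + 2) := by
  have h1 : 2 ^ (r + 1) ≤ Nat.factorial (r + 2) := by
    induction r with
    | zero => decide
    | succ r ih =>
      rw [pow_succ, Nat.factorial_succ, mul_comm]
      exact Nat.mul_le_mul (by omega) ih
  have h2 : 2 ^ r ≤ 3 ^ (r + 2) :=
    (Nat.pow_le_pow_left (by norm_num) r).trans (Nat.pow_le_pow_right (by norm_num) (by omega))
  calc 2 ^ r * 2 ^ (r + 1) = 2 ^ (r + 1) * 1 * 2 ^ r := by ring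
    _ ≤ _ := Nat.mul_le_mul (Nat.mul_le_mul h1 Nat.one_le_two_pow) h2

/-- The number of isomorphism classes of graphs on `n ≥ 1` vertices with linear rankwidth at
most `r` is at most `((r+2)!·2^{r(r-1)/2}·3^{r+2})^n`: there is a labeling of such graphs
by at most that many values such that two graphs get the same value iff they are isomorphic. -/
theorem count_lrw_le {n r : ℕ} (hn : 1 ≤ n) :
    ∃ f : {G : SimpleGraph (Fin n) // lrw G ≤ r} →
        Fin ((Nat.factorial (r + 2) * 2 ^ (r * (r - 1) / 2) * 3 ^ (r + 2)) ^ n),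
      ∀ G₁ G₂ : {G : SimpleGraph (Fin n) // lrw G ≤ r},
        f G₁ = f G₂ ↔ Nonempty (G₁.1 ≃g G₂.1) := by
  have hcode : ∀ G : {G : SimpleGraph (Fin n) // lrw G ≤ r}, _ :=
    fun G => exists_code_of_lrw_le G.2
  choose t e ht using hcode
  have hiso : ∀ G₁ G₂, t G₁ = t G₂ → Nonempty (G₁.1 ≃g G₂.1) := by
    intro G₁ G₂ h
    have key : ∀ x m : Fin n, x < m →
        (G₁.1.Adj (e G₁ x) (e G₁ m) ↔ G₂.1.Adj (e G₂ x) (e G₂ m)) := by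
      intro x m hxm
      rw [ht G₁ x m hxm, ht G₂ x m hxm, h]
    have key' : ∀ x m : Fin n,
        (G₁.1.Adj (e G₁ x) (e G₁ m) ↔ G₂.1.Adj (e G₂ x) (e G₂ m)) := by
      intro x m
      rcases lt_trichotomy x m with hxm | rfl | hxm
      · exact key x m hxm
      · simp
      · rw [G₁.1.adj_comm, G₂.1.adj_comm]
        exact key m x hxm
    refine ⟨⟨(e G₁).symm.trans (e G₂), fun {u v} => ?_⟩⟩
    simpa using (key' ((e G₁).symm u) ((e G₁).symm v)).symm
  have hemb : Nonempty ((Fin n → (Fin r → ZMod 2) × (Option (Fin r) → ZMod 2)) ↪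
      Fin ((Nat.factorial (r + 2) * 2 ^ (r * (r - 1) / 2) * 3 ^ (r + 2)) ^ n)) := by
    refine Function.Embedding.nonempty_of_card_le ?_
    simp only [Fintype.card_pi, Fintype.card_prod, Fintype.card_fin, ZMod.card, Finset.prod_const,
      Finset.card_univ, Fintype.card_option]
    exact Nat.pow_le_pow_left (code_card_le r) n
  obtain ⟨ι⟩ := hemb
  let S : Setoid {G : SimpleGraph (Fin n) // lrw G ≤ r} :=
    { r := fun G₁ G₂ => Nonempty (G₁.1 ≃g G₂.1)
      iseqv := ⟨fun _ => ⟨SimpleGraph.Iso.refl⟩, fun ⟨φ⟩ => ⟨φ.symm⟩,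
        fun ⟨φ⟩ ⟨ψ⟩ => ⟨φ.trans ψ⟩⟩ }
  -- Encoding one representative per class makes isomorphic graphs share a label.
  have hrep : ∀ G, Nonempty ((Quotient.mk S G).out.1 ≃g G.1) := fun G => Quotient.mk_out (s := S) G
  refine ⟨fun G => ι (t (Quotient.mk S G).out), fun G₁ G₂ => ⟨fun h => ?_, fun h => ?_⟩⟩
  · obtain ⟨φ⟩ := hiso _ _ (ι.injective h)
    obtain ⟨φ₁⟩ := hrep G₁
    obtain ⟨φ₂⟩ := hrep G₂
    exact ⟨(φ₁.symm.trans φ).trans φ₂⟩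
  · have : Quotient.mk S G₁ = Quotient.mk S G₂ := Quotient.sound h
    simp only [this]
end

section
/- There exist a constant c > 0 and an integer r₀ such that for every integer r ≥ r₀ and every polynomial P with real coefficients, if every finite simple graph G with rankwidth at most r satisfies χ(G) ≤ P(ω(G)), then the degree of P is at least c · log r. -/
/-!
For a prime `p`, the polarity graph on the `p ^ 2` points of the affine plane over `ZMod p`
contains no `K₄`, because two points have at most one common neighbour (`polGraph_clique`), and
its independent sets have at most `2 * p ^ (3 / 2)` points, by a second moment count
(`polGraph_indep`). Its `k`-th lexicographic power therefore has clique number at most `3 ^ k`,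
and its chromatic number is at least its order over its independence number, that is at least
`(p / 4) ^ (k / 2)`.

The rankwidth of these powers does not grow with `k` (`exists_lexPow`). They are decomposed by
nesting: the blocks of a module are decomposed recursively and then merged one at a time. Every
set of vertices that occurs splits into at most `p ^ 2` classes of vertices with the same
neighbours outside the set, so its cut-rank is at most `p ^ 2`. The leaf sets of such a binary
decomposition form a laminar family, and the Hasse diagram of this family is the decomposition
tree (`rankDecompWidthLE_of_built`). An additional isolated vertex serves as a leaf above the
root, which makes the degree of the root equal to three.

If `χ ≤ P(ω)` on graphs of rankwidth at most `r` and `p ^ 2 ≤ r`, then letting `k` grow gives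
`p / 4 ≤ 9 ^ deg P` (`prime_le_of_bound`). Bertrand's postulate supplies a prime `p` of order `√r`,
so `deg P` is at least a constant times `log r`.
-/

open scoped Classical

/-- `G` admits a rank decomposition of width at most `r`: a tree `T` with at least two nodes,
every node of degree `1` or `3`, a bijection `L` from the vertices of `G` to the leaves of `T`,
such that every edge `uv` of `T` cuts the leaves (hence the vertices of `G`) into two parts of
cut-rank at most `r`. -/
def RankDecompWidthLE {V : Type} [Fintype V] (G : SimpleGraph V) (r : ℕ) : Prop :=
  ∃ (k : ℕ) (T : SimpleGraph (Fin k)), 2 ≤ k ∧ T.IsTree ∧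
    (∀ t : Fin k, T.degree t = 1 ∨ T.degree t = 3) ∧
    ∃ L : V ≃ {t : Fin k // T.degree t = 1},
      ∀ u v : Fin k, T.Adj u v →
        cutRank G {x : V | (T.deleteEdges {s(u, v)}).Reachable (L x).1 u} ≤ r

/-- The rankwidth of a finite graph: the least width of a rank decomposition
(`0` by convention if no rank decomposition exists, e.g. for graphs with fewer
than two vertices). -/
noncomputable def rankw {V : Type} [Fintype V] (G : SimpleGraph V) : ℕ :=
  sInf { r | RankDecompWidthLE G r }

/-! ### Trees from tree orders -/

section TreeOrder

lemma covBy_unique {N : Type} [PartialOrder N]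
    (hch : ∀ x y z : N, x ≤ y → x ≤ z → y ≤ z ∨ z ≤ y) {x y z : N}
    (hy : x ⋖ y) (hz : x ⋖ z) : y = z := by
  rcases hch x y z hy.le hz.le with h | h
  · exact (hz.eq_or_eq hy.le h).resolve_left hy.lt.ne'
  · exact ((hy.eq_or_eq hz.le h).resolve_left hz.lt.ne').symm

lemma hasse_reachable_le {N : Type} [PartialOrder N] [Finite N] {x y : N} (hxy : x ⋖ y) (z : N) (hz : z ≤ x) :
    ((SimpleGraph.hasse N).deleteEdges {s(x, y)}).Reachable z x := by
  induction z using WellFoundedGT.induction with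
  | ind z ih =>
    rcases hz.eq_or_lt with rfl | hlt
    · exact SimpleGraph.Reachable.refl _
    · obtain ⟨w, hzw, hwx⟩ := exists_covBy_le_of_lt hlt
      refine SimpleGraph.Reachable.trans (SimpleGraph.Adj.reachable ?_) (ih w hzw.lt hwx)
      rw [SimpleGraph.deleteEdges_adj]
      refine ⟨Or.inl hzw, ?_⟩
      have h1 : z ≠ x := hlt.ne
      have h2 : z ≠ y := (hlt.trans hxy.lt).ne
      simp [h1, h2]

variable {N : Type} [PartialOrder N] [OrderTop N] [Finite N]

lemma hasse_reachable_top {x y : N} (z : N) (hz : ¬ z ≤ x) :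
    ((SimpleGraph.hasse N).deleteEdges {s(x, y)}).Reachable z ⊤ := by
  induction z using WellFoundedGT.induction with
  | ind z ih =>
    rcases (le_top : z ≤ ⊤).eq_or_lt with rfl | hlt
    · exact SimpleGraph.Reachable.refl _
    · obtain ⟨w, hzw, -⟩ := exists_covBy_le_of_lt hlt
      have hw : ¬ w ≤ x := fun h => hz (hzw.le.trans h)
      refine SimpleGraph.Reachable.trans (SimpleGraph.Adj.reachable ?_) (ih w hzw.lt hw)
      rw [SimpleGraph.deleteEdges_adj]
      refine ⟨Or.inl hzw, ?_⟩
      have h1 : z ≠ x := fun h => hz h.le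
      have h2 : w ≠ x := fun h => hw h.le
      simp [h1, h2]

/-- Deleting the edge from `x` to its cover separates exactly the down-set of `x`. -/
lemma hasse_reachable_iff {N : Type} [PartialOrder N] [Finite N]
    (hch : ∀ x y z : N, x ≤ y → x ≤ z → y ≤ z ∨ z ≤ y) {x y : N}
    (hxy : x ⋖ y) (z : N) :
    ((SimpleGraph.hasse N).deleteEdges {s(x, y)}).Reachable z x ↔ z ≤ x := by
  refine ⟨fun h => ?_, hasse_reachable_le hxy z⟩
  have key : ∀ a b : N, a ≤ x → ((SimpleGraph.hasse N).deleteEdges {s(x, y)}).Adj a b → b ≤ x := by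
    intro a b ha hab
    rw [SimpleGraph.deleteEdges_adj] at hab
    obtain ⟨hab | hab, hne⟩ := hab
    · rcases hch a b x hab.le ha with h | h
      · exact h
      · rcases hab.eq_or_eq ha h with h' | h'
        · subst h'
          exact absurd (by rw [covBy_unique hch hab hxy]; rfl) hne
        · exact h'.ge
    · exact hab.le.trans ha
  obtain ⟨w⟩ := h.symm
  have : ∀ {a b : N}, ((SimpleGraph.hasse N).deleteEdges {s(x, y)}).Walk a b → a ≤ x → b ≤ x := by
    intro a b w
    induction w with
    | nil => exact id
    | cons h _ ih => exact fun ha => ih (key _ _ ha h)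
  exact this w le_rfl

/-- The other side of the edge from `x` to its cover `y`. -/
lemma hasse_reachable_iff' (hch : ∀ x y z : N, x ≤ y → x ≤ z → y ≤ z ∨ z ≤ y) {x y : N}
    (hxy : x ⋖ y) (z : N) :
    ((SimpleGraph.hasse N).deleteEdges {s(x, y)}).Reachable z y ↔ ¬ z ≤ x := by
  have hy := hasse_reachable_top (y := y) y hxy.lt.not_ge
  constructor
  · intro h hz
    have := h.symm.trans ((hasse_reachable_iff hch hxy z).2 hz)
    exact hxy.lt.not_ge ((hasse_reachable_iff hch hxy y).1 this)
  · intro hz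
    exact (hasse_reachable_top z hz).trans hy.symm

/-- The Hasse diagram of a finite order with a top in which all principal up-sets are chains
is a tree. -/
lemma hasse_isTree (hch : ∀ x y z : N, x ≤ y → x ≤ z → y ≤ z ∨ z ≤ y) :
    (SimpleGraph.hasse N).IsTree := by
  have htop : ∀ z : N, (SimpleGraph.hasse N).Reachable z ⊤ := by
    intro z
    induction z using WellFoundedGT.induction with
    | ind z ih =>
      rcases (le_top : z ≤ ⊤).eq_or_lt with rfl | hlt
      · exact SimpleGraph.Reachable.refl _
      · obtain ⟨w, hzw, -⟩ := exists_covBy_le_of_lt hlt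
        exact SimpleGraph.Reachable.trans
          (SimpleGraph.Adj.reachable (Or.inl hzw)) (ih w hzw.lt)
  refine ⟨⟨fun a b => (htop a).trans (htop b).symm⟩, ?_⟩
  rw [SimpleGraph.isAcyclic_iff_forall_isBridge]
  intro e he
  induction e using Sym2.ind with
  | _ u v =>
    rw [SimpleGraph.mem_edgeSet] at he
    rw [SimpleGraph.isBridge_iff]
    rcases he with he | he
    · intro h
      exact (hasse_reachable_iff' hch he u).1 h le_rfl
    · intro h
      rw [Sym2.eq_swap] at h
      exact (hasse_reachable_iff' hch he v).1 h.symm le_rfl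

end TreeOrder

/-! ### Rank decompositions from binary laminar families -/

/-- The definition of a rank decomposition asks for node set `Fin k`; any finite node type works. -/
lemma rankDecompWidthLE_of_tree {V : Type} [Fintype V] (G : SimpleGraph V) (r : ℕ)
    {N : Type} [Fintype N] (T : SimpleGraph N) (hN : 2 ≤ Fintype.card N) (hT : T.IsTree)
    (hdeg : ∀ t, T.degree t = 1 ∨ T.degree t = 3) (L : V ≃ {t : N // T.degree t = 1})
    (hw : ∀ u v, T.Adj u v →
      cutRank G {x : V | (T.deleteEdges {s(u, v)}).Reachable (L x).1 u} ≤ r) :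
    RankDecompWidthLE G r := by
  let e : N ≃ Fin (Fintype.card N) := Fintype.equivFin N
  obtain ⟨T', ⟨φ⟩⟩ : ∃ T' : SimpleGraph (Fin (Fintype.card N)), Nonempty (T ≃g T') :=
    ⟨T.map e.toEmbedding, ⟨SimpleGraph.Iso.map e T⟩⟩
  have hd : ∀ t, T'.degree (φ t) = T.degree t := fun t => by
    convert φ.degree_eq t
  refine ⟨Fintype.card N, T', hN, φ.isTree_iff.1 hT, ?_, ?_⟩
  · intro t
    obtain ⟨t, rfl⟩ := φ.surjective t
    rw [hd]; exact hdeg t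
  · refine ⟨L.trans (φ.toEquiv.subtypeEquiv (fun a => ?_)), ?_⟩
    · change _ ↔ T'.degree (φ a) = 1
      rw [hd]
    · intro u v huv
      obtain ⟨u, rfl⟩ := φ.surjective u
      obtain ⟨v, rfl⟩ := φ.surjective v
      have huv' : T.Adj u v := φ.map_adj_iff.1 huv
      let ψ : T.deleteEdges {s(u, v)} ≃g T'.deleteEdges {s(φ u, φ v)} :=
        { toEquiv := φ.toEquiv
          map_rel_iff' := by
            intro a b
            have := φ.map_adj_iff (v := a) (w := b)
            have h2 : ∀ a b, φ a = φ b ↔ a = b := fun a b => φ.injective.eq_iff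
            simp only [SimpleGraph.deleteEdges_adj, Set.mem_singleton_iff, Sym2.eq_iff]
            change T'.Adj (φ a) (φ b) ∧ ¬((φ a = φ u ∧ φ b = φ v) ∨ (φ a = φ v ∧ φ b = φ u)) ↔ _
            rw [this, h2, h2, h2, h2] }
      convert hw u v huv' using 2
      ext x
      exact ψ.reachable_iff (u := (L x).1) (v := u)

/-- Sets obtained from singletons by disjoint unions, with every intermediate set satisfying
`Q`: a rooted binary tree whose leaves are the elements of the set. -/
inductive Built {V : Type} (Q : Set V → Prop) : Set V → Prop
  | single (v : V) : Q {v} → Built Q {v}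
  | union (A B : Set V) : Built Q A → Built Q B → Disjoint A B → Q (A ∪ B) → Built Q (A ∪ B)

/-- The laminar family of leaf sets of the subtrees of a rooted binary tree. -/
lemma Built.exists_family {V : Type} {Q : Set V → Prop} {A : Set V} (h : Built Q A) :
    ∃ F : Set (Set V), A ∈ F ∧ (∀ X ∈ F, X ⊆ A ∧ X.Nonempty ∧ Q X) ∧
      (∀ X ∈ F, ∀ Y ∈ F, X ⊆ Y ∨ Y ⊆ X ∨ Disjoint X Y) ∧ (∀ v ∈ A, {v} ∈ F) ∧
      (∀ X ∈ F, (∃ v, X = {v}) ∨ ∃ Y ∈ F, ∃ Z ∈ F, Disjoint Y Z ∧ X = Y ∪ Z) := by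
  induction h with
  | single v hv =>
    refine ⟨{{v}}, rfl, ?_, ?_, ?_, ?_⟩
    · rintro X rfl
      exact ⟨subset_rfl, Set.singleton_nonempty v, hv⟩
    · rintro X rfl Y rfl
      exact Or.inl subset_rfl
    · rintro w rfl
      rfl
    · rintro X rfl
      exact Or.inl ⟨v, rfl⟩
  | union A B _ _ hAB hQ ihA ihB =>
    obtain ⟨F, hF, hF1, hF2, hF3, hF4⟩ := ihA
    obtain ⟨H, hH, hH1, hH2, hH3, hH4⟩ := ihB
    have hsub : ∀ X ∈ insert (A ∪ B) (F ∪ H), X ⊆ A ∪ B := by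
      rintro X (rfl | hX | hX)
      · exact subset_rfl
      · exact (hF1 X hX).1.trans Set.subset_union_left
      · exact (hH1 X hX).1.trans Set.subset_union_right
    refine ⟨insert (A ∪ B) (F ∪ H), Or.inl rfl, ?_, ?_, ?_, ?_⟩
    · intro X hX
      refine ⟨hsub X hX, ?_⟩
      rcases hX with rfl | hX | hX
      · exact ⟨(hF1 A hF).2.1.mono Set.subset_union_left, hQ⟩
      · exact (hF1 X hX).2
      · exact (hH1 X hX).2
    · intro X hX Y hY
      rcases id hX with rfl | hX' | hX'
      · exact Or.inr (Or.inl (hsub Y hY))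
      · rcases id hY with rfl | hY' | hY'
        · exact Or.inl (hsub X hX)
        · exact hF2 X hX' Y hY'
        · exact Or.inr (Or.inr (hAB.mono (hF1 X hX').1 (hH1 Y hY').1))
      · rcases id hY with rfl | hY' | hY'
        · exact Or.inl (hsub X hX)
        · exact Or.inr (Or.inr (hAB.symm.mono (hH1 X hX').1 (hF1 Y hY').1))
        · exact hH2 X hX' Y hY'
    · rintro v (hv | hv)
      · exact Or.inr (Or.inl (hF3 v hv))
      · exact Or.inr (Or.inr (hH3 v hv))
    · rintro X (rfl | hX | hX)
      · exact Or.inr ⟨A, Or.inr (Or.inl hF), B, Or.inr (Or.inr hH), hAB, rfl⟩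
      · rcases hF4 X hX with h | ⟨Y, hY, Z, hZ, h⟩
        · exact Or.inl h
        · exact Or.inr ⟨Y, Or.inr (Or.inl hY), Z, Or.inr (Or.inl hZ), h⟩
      · rcases hH4 X hX with h | ⟨Y, hY, Z, hZ, h⟩
        · exact Or.inl h
        · exact Or.inr ⟨Y, Or.inr (Or.inr hY), Z, Or.inr (Or.inr hZ), h⟩

lemma degree_eq_one_of_nbr {N : Type} [Fintype N] (T : SimpleGraph N) (x a : N)
    (h : ∀ y, T.Adj x y ↔ y = a) : T.degree x = 1 := by
  rw [← SimpleGraph.card_neighborFinset_eq_degree]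
  have : T.neighborFinset x = {a} := by ext y; simp [h]
  rw [this]; simp

lemma degree_eq_three_of_nbr {N : Type} [Fintype N] (T : SimpleGraph N) (x a b c : N)
    (hab : a ≠ b) (hac : a ≠ c) (hbc : b ≠ c)
    (h : ∀ y, T.Adj x y ↔ y = a ∨ y = b ∨ y = c) : T.degree x = 3 := by
  rw [← SimpleGraph.card_neighborFinset_eq_degree]
  have : T.neighborFinset x = {a, b, c} := by ext y; simp [h]
  rw [this]; exact Finset.card_eq_three.2 ⟨a, b, c, hab, hac, hbc, rfl⟩

/-- The tree of a rooted binary decomposition of `V ∖ {v₀}`, with `v₀` hung above its root,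
is a rank decomposition. Its nodes are the leaf sets of the subtrees, ordered by inclusion. -/
lemma rankDecompWidthLE_of_built {V : Type} [Fintype V] (G : SimpleGraph V) (r : ℕ)
    (Q : Set V → Prop) (hQ : ∀ X, Q X → cutRank G X ≤ r ∧ cutRank G Xᶜ ≤ r) (v₀ : V)
    (hB : Built Q {v₀}ᶜ) : RankDecompWidthLE G r := by
  obtain ⟨F, hA, hF1, hF2, hF3, hF4⟩ := hB.exists_family
  have hv0 : ∀ X ∈ F, v₀ ∉ X := fun X hX h => (hF1 X hX).1 h rfl
  have huniv : Set.univ ∉ F := fun h => hv0 _ h (Set.mem_univ _)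
  let N : Type := {X : Set V // X = Set.univ ∨ X ∈ F}
  let _ : OrderTop N := { top := ⟨Set.univ, Or.inl rfl⟩, le_top := fun X => Set.subset_univ X.1 }
  have : Finite N := Subtype.finite
  let _ : Fintype N := Fintype.ofFinite N
  have hne : ∀ X : N, X.1.Nonempty := by
    rintro ⟨X, rfl | hX⟩
    · exact ⟨v₀, trivial⟩
    · exact (hF1 X hX).2.1
  have hlam : ∀ X Y : N, X ≤ Y ∨ Y ≤ X ∨ Disjoint X.1 Y.1 := by
    rintro ⟨X, rfl | hX⟩ ⟨Y, hY⟩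
    · exact Or.inr (Or.inl (Set.subset_univ Y))
    · rcases hY with rfl | hY
      · exact Or.inl (Set.subset_univ X)
      · exact hF2 X hX Y hY
  have hch : ∀ X Y Z : N, X ≤ Y → X ≤ Z → Y ≤ Z ∨ Z ≤ Y := by
    intro X Y Z hY hZ
    rcases hlam Y Z with h | h | h
    · exact Or.inl h
    · exact Or.inr h
    · obtain ⟨x, hx⟩ := hne X
      exact absurd (hZ hx) (Set.disjoint_left.1 h (hY hx))
  have hcov : ∀ X : N, X ≠ ⊤ → ∃ Y, X ⋖ Y := fun X hX => by
    obtain ⟨w, hw, -⟩ := exists_covBy_le_of_lt (lt_top_iff_ne_top.2 hX)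
    exact ⟨w, hw⟩
  let T := SimpleGraph.hasse N
  have hTadj : ∀ X Y : N, T.Adj X Y ↔ X ⋖ Y ∨ Y ⋖ X := fun X Y => Iff.rfl
  -- the top `univ` stands for the leaf `v₀`: its only neighbour is `{v₀}ᶜ`
  let A : N := ⟨{v₀}ᶜ, Or.inr hA⟩
  have hAtop : A ≠ ⊤ := fun h => huniv (by
    have : ({v₀}ᶜ : Set V) = Set.univ := congrArg Subtype.val h
    rw [← this]; exact hA)
  have hleA : ∀ X : N, X ≠ ⊤ → X ≤ A := by
    rintro ⟨X, rfl | hX⟩ h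
    · exact absurd rfl h
    · exact (hF1 X hX).1
  have hAcov : A ⋖ ⊤ :=
    ⟨lt_top_iff_ne_top.2 hAtop, fun Z h1 h2 => (hleA Z h2.ne).not_gt h1⟩
  have hdtop : T.degree ⊤ = 1 := by
    apply degree_eq_one_of_nbr T ⊤ A
    intro Y
    rw [hTadj]
    constructor
    · rintro (h | h)
      · exact absurd h.lt not_top_lt
      · exact ((h.eq_or_eq (hleA Y h.lt.ne) hAcov.le).resolve_right hAtop).symm
    · rintro rfl
      exact Or.inr hAcov
  let sing : ∀ v, v ≠ v₀ → N := fun v hv => ⟨{v}, Or.inr (hF3 v hv)⟩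
  have hsing_le : ∀ v hv (X : N), v ∈ X.1 ↔ sing v hv ≤ X := fun v hv X =>
    Set.singleton_subset_iff.symm
  have hsing_top : ∀ v hv, sing v hv ≠ ⊤ := by
    intro v hv h
    have : ({v} : Set V) = Set.univ := congrArg Subtype.val h
    have h2 : v₀ ∈ ({v} : Set V) := by rw [this]; trivial
    exact hv h2.symm
  have hdsing : ∀ v hv, T.degree (sing v hv) = 1 := by
    intro v hv
    obtain ⟨Y, hY⟩ := hcov (sing v hv) (hsing_top v hv)
    apply degree_eq_one_of_nbr T _ Y
    intro Z
    rw [hTadj]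
    constructor
    · rintro (h | h)
      · exact covBy_unique hch h hY
      · exfalso
        have h1 : Z.1 ⊆ {v} := h.le
        obtain ⟨z, hz⟩ := hne Z
        have h2 : z = v := h1 hz
        subst h2
        exact h.lt.not_ge ((hsing_le z hv Z).1 hz)
    · rintro rfl
      exact Or.inl hY
  have hdother : ∀ X : N, X ≠ ⊤ → (∀ v hv, X ≠ sing v hv) → T.degree X = 3 := by
    intro X hX hXs
    obtain ⟨W, hW⟩ := hcov X hX
    have hXF : X.1 ∈ F := X.2.resolve_left (fun h => hX (Subtype.ext h))
    rcases hF4 X.1 hXF with ⟨v, hv⟩ | ⟨Y', hY', Z', hZ', hd, hXYZ⟩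
    · refine absurd (Subtype.ext hv) (hXs v ?_)
      rintro rfl
      exact hv0 _ hXF (by rw [hv]; rfl)
    · -- the neighbours of `X` are its cover and its two halves
      have hhalf : ∀ Y Z : N, Disjoint Y.1 Z.1 → X.1 = Y.1 ∪ Z.1 → Y < X := by
        intro Y Z hd hX
        refine lt_of_le_not_ge (fun y hy => by rw [hX]; exact Or.inl hy) (fun h => ?_)
        obtain ⟨z, hz⟩ := hne Z
        exact Set.disjoint_left.1 hd (h (by rw [hX]; exact Or.inr hz)) hz
      have hbelow : ∀ Y Z U : N, Disjoint Y.1 Z.1 → X.1 = Y.1 ∪ Z.1 → U < X → U ≤ Y ∨ U ≤ Z := by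
        intro Y Z U hd hX hU
        by_contra hcon
        push Not at hcon
        have hcut : ∀ Y Z : N, X.1 = Y.1 ∪ Z.1 → ¬ U ≤ Y → ¬ U ≤ Z → Y ≤ U := by
          intro Y Z hX h1 h2
          rcases hlam U Y with h | h | h
          · exact absurd h h1
          · exact h
          · refine absurd (fun u hu => ?_) h2
            have : u ∈ Y.1 ∪ Z.1 := by rw [← hX]; exact hU.le hu
            exact this.resolve_left (Set.disjoint_left.1 h hu)
        have h1 := hcut Y Z hX hcon.1 hcon.2
        have h2 := hcut Z Y (by rw [hX, Set.union_comm]) hcon.2 hcon.1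
        refine hU.not_ge (fun x hx => ?_)
        rw [hX] at hx
        exact hx.elim (fun h => h1 h) (fun h => h2 h)
      let Y : N := ⟨Y', Or.inr hY'⟩
      let Z : N := ⟨Z', Or.inr hZ'⟩
      have hYX : Y < X := hhalf Y Z hd hXYZ
      have hZX : Z < X := hhalf Z Y hd.symm (by rw [hXYZ, Set.union_comm])
      have hnle : ∀ Y Z : N, Disjoint Y.1 Z.1 → ¬ Y ≤ Z := by
        intro Y Z hd h
        obtain ⟨y, hy⟩ := hne Y
        exact Set.disjoint_left.1 hd hy (h hy)
      have hYc : Y ⋖ X := by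
        refine ⟨hYX, fun U h1 h2 => ?_⟩
        rcases hbelow Y Z U hd hXYZ h2 with h | h
        · exact h.not_gt h1
        · exact hnle Y Z hd (h1.le.trans h)
      have hZc : Z ⋖ X := by
        refine ⟨hZX, fun U h1 h2 => ?_⟩
        rcases hbelow Y Z U hd hXYZ h2 with h | h
        · exact hnle Z Y hd.symm (h1.le.trans h)
        · exact h.not_gt h1
      apply degree_eq_three_of_nbr T X W Y Z
      · exact (hYX.trans hW.lt).ne'
      · exact (hZX.trans hW.lt).ne'
      · exact fun h => hnle Y Z hd h.le
      · intro U
        rw [hTadj]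
        constructor
        · rintro (h | h)
          · exact Or.inl (covBy_unique hch h hW)
          · rcases hbelow Y Z U hd hXYZ h.lt with h' | h'
            · exact Or.inr (Or.inl ((h.eq_or_eq h' hYX.le).resolve_right hYX.ne).symm)
            · exact Or.inr (Or.inr ((h.eq_or_eq h' hZX.le).resolve_right hZX.ne).symm)
        · rintro (rfl | rfl | rfl)
          · exact Or.inl hW
          · exact Or.inr hYc
          · exact Or.inr hZc
  let L0 : V → N := fun v => if hv : v = v₀ then ⊤ else sing v hv
  have hL0pos : L0 v₀ = ⊤ := dif_pos rfl
  have hL0neg : ∀ v hv, L0 v = sing v hv := fun v hv => dif_neg hv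
  have hL0 : ∀ v, T.degree (L0 v) = 1 := by
    intro v
    by_cases hv : v = v₀
    · rw [hv, hL0pos]; exact hdtop
    · rw [hL0neg v hv]; exact hdsing v hv
  have hLle : ∀ (X : N), X ≠ ⊤ → ∀ v, L0 v ≤ X ↔ v ∈ X.1 := by
    intro X hX v
    by_cases hv : v = v₀
    · rw [hv, hL0pos]
      have := hv0 X.1 (X.2.resolve_left (fun h => hX (Subtype.ext h)))
      simp [hX, this]
    · rw [hL0neg v hv]
      exact (hsing_le v hv X).symm
  have hbij : Function.Bijective (fun v => (⟨L0 v, hL0 v⟩ : {t : N // T.degree t = 1})) := by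
    constructor
    · intro v w h
      have h : L0 v = L0 w := congrArg Subtype.val h
      by_cases hv : v = v₀
      · by_cases hw : w = v₀
        · rw [hv, hw]
        · rw [hv, hL0pos, hL0neg w hw] at h
          exact absurd h.symm (hsing_top w hw)
      · by_cases hw : w = v₀
        · rw [hw, hL0pos, hL0neg v hv] at h
          exact absurd h (hsing_top v hv)
        · rw [hL0neg v hv, hL0neg w hw] at h
          exact Set.singleton_injective (congrArg Subtype.val h)
    · rintro ⟨X, hX⟩
      by_cases hXt : X = ⊤
      · exact ⟨v₀, Subtype.ext (hL0pos.trans hXt.symm)⟩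
      · by_cases hXs : ∀ v hv, X ≠ sing v hv
        · rw [hdother X hXt hXs] at hX
          omega
        · push Not at hXs
          obtain ⟨v, hv, rfl⟩ := hXs
          exact ⟨v, Subtype.ext (hL0neg v hv)⟩
  refine rankDecompWidthLE_of_tree G r T ?_ (hasse_isTree hch) ?_ (Equiv.ofBijective _ hbij) ?_
  · exact Fintype.one_lt_card_iff.2 ⟨A, ⊤, hAtop⟩
  · intro X
    by_cases hXt : X = ⊤
    · left; rw [hXt]; exact hdtop
    · by_cases hXs : ∀ v hv, X ≠ sing v hv
      · exact Or.inr (hdother X hXt hXs)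
      · push Not at hXs
        obtain ⟨v, hv, rfl⟩ := hXs
        exact Or.inl (hdsing v hv)
  · intro X Y hXY
    have hQF : ∀ X : N, X ≠ ⊤ → Q X.1 := fun X hX =>
      (hF1 X.1 (X.2.resolve_left (fun h => hX (Subtype.ext h)))).2.2
    simp only [Equiv.ofBijective_apply]
    rcases hXY with h | h
    · have hX : X ≠ ⊤ := h.lt.ne_top
      have : {v : V | (T.deleteEdges {s(X, Y)}).Reachable (L0 v) X} = X.1 := by
        ext v
        exact (hasse_reachable_iff hch h (L0 v)).trans (hLle X hX v)
      rw [this]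
      exact (hQ _ (hQF X hX)).1
    · have hY : Y ≠ ⊤ := h.lt.ne_top
      have : {v : V | (T.deleteEdges {s(X, Y)}).Reachable (L0 v) X} = Y.1ᶜ := by
        ext v
        rw [Sym2.eq_swap]
        exact (hasse_reachable_iff' hch h (L0 v)).trans (not_congr (hLle Y hY v))
      rw [this]
      exact (hQ _ (hQF Y hY)).2

/-! ### Modular partitions and lexicographic products -/

/-- `X` splits into classes, indexed by `C`, whose members have the same neighbours
outside `X`. -/
def FewTypes (C : Type) {V : Type} (G : SimpleGraph V) (X : Set V) : Prop :=
  ∃ c : V → C, ∀ x ∈ X, ∀ y ∈ X, c x = c y → ∀ z ∉ X, (G.Adj x z ↔ G.Adj y z)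

/-- A matrix whose rows take at most `|C|` values has rank at most `|C|`. -/
lemma rank_le_of_rows {m n C : Type} [Fintype m] [Fintype n] [Fintype C]
    (M : Matrix m n (ZMod 2)) (c : m → C) (h : ∀ i j, c i = c j → M i = M j) :
    M.rank ≤ Fintype.card C := by
  let M' : Matrix C n (ZMod 2) :=
    Matrix.of fun k j => if hk : ∃ i, c i = k then M hk.choose j else 0
  have hM : ∀ i j, M i j = M' (c i) j := by
    intro i j
    have hk : ∃ i', c i' = c i := ⟨i, rfl⟩
    simp only [M', Matrix.of_apply, dif_pos hk]
    rw [h _ _ hk.choose_spec]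
  have hmul : M = (Matrix.of fun i k => if c i = k then (1 : ZMod 2) else 0) * M' := by
    ext i j
    simp [Matrix.mul_apply, hM]
  rw [hmul]
  exact (Matrix.rank_mul_le_right _ _).trans (Matrix.rank_le_card_height _)

lemma rank_le_of_cols {m n C : Type} [Fintype m] {_ : Fintype n} [Fintype C]
    (M : Matrix m n (ZMod 2)) (c : n → C) (h : ∀ i j, c i = c j → ∀ k, M k i = M k j) :
    M.rank ≤ Fintype.card C := by
  rw [← Matrix.rank_transpose]
  exact rank_le_of_rows _ c (fun i j hij => funext (h i j hij))

lemma FewTypes.cutRank_le {C V : Type} [Fintype V] [Fintype C] {G : SimpleGraph V} {X : Set V}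
    (h : FewTypes C G X) : cutRank G X ≤ Fintype.card C ∧ cutRank G Xᶜ ≤ Fintype.card C := by
  obtain ⟨c, hc⟩ := h
  constructor
  · refine rank_le_of_rows _ (fun x => c x.1) (fun x y hxy => ?_)
    ext z
    simp only [Matrix.of_apply]
    rw [hc x.1 x.2 y.1 y.2 hxy z.1 z.2]
  · refine rank_le_of_cols _ (fun x => c x.1) (fun x y hxy z => ?_)
    simp only [Matrix.of_apply]
    rw [G.adj_comm z.1 x.1, G.adj_comm z.1 y.1,
      hc x.1 (not_not.1 x.2) y.1 (not_not.1 y.2) hxy z.1 z.2]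

/-- A binary decomposition is carried along an embedding onto a module. -/
lemma Built.map {C U V : Type} {H : SimpleGraph U} {G : SimpleGraph V} (f : U ↪ V)
    (hf : ∀ x y, G.Adj (f x) (f y) ↔ H.Adj x y)
    (hm : ∀ z ∉ Set.range f, ∀ x y, G.Adj (f x) z ↔ G.Adj (f y) z)
    {A : Set U} (h : Built (FewTypes C H) A) : Built (FewTypes C G) (f '' A) := by
  have key : ∀ A : Set U, A.Nonempty → FewTypes C H A → FewTypes C G (f '' A) := by
    rintro A ⟨a, -⟩ ⟨c, hc⟩
    have : Nonempty U := ⟨a⟩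
    refine ⟨fun v => c (Function.invFun f v), ?_⟩
    rintro _ ⟨x, hx, rfl⟩ _ ⟨y, hy, rfl⟩ hxy z hz
    simp only [Function.leftInverse_invFun f.injective _] at hxy
    by_cases hzr : z ∈ Set.range f
    · obtain ⟨w, rfl⟩ := hzr
      rw [hf, hf]
      exact hc x hx y hy hxy w (fun hw => hz ⟨w, hw, rfl⟩)
    · exact hm z hzr x y
  have hne : ∀ A : Set U, Built (FewTypes C H) A → A.Nonempty := by
    intro A h
    obtain ⟨F, hA, hF, -⟩ := h.exists_family
    exact (hF A hA).2.1
  induction h with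
  | single v hv =>
    have := key _ (Set.singleton_nonempty v) hv
    rw [Set.image_singleton] at this ⊢
    exact Built.single _ this
  | union A B hA hB hd hQ ihA ihB =>
    have := key _ ((hne A hA).mono Set.subset_union_left) hQ
    rw [Set.image_union] at this ⊢
    exact Built.union _ _ ihA ihB ((Set.disjoint_image_iff f.injective).2 hd) this

/-- The lexicographic product: a copy of `H` is substituted for every vertex of `G`. -/
def lexProd {W U : Type} (G : SimpleGraph W) (H : SimpleGraph U) : SimpleGraph (W × U) where
  Adj x y := G.Adj x.1 y.1 ∨ (x.1 = y.1 ∧ H.Adj x.2 y.2)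
  symm := ⟨fun _ _ h => h.imp (fun h => h.symm) (fun h => ⟨h.1.symm, h.2.symm⟩)⟩
  loopless := ⟨fun _ h => h.elim (fun h => G.loopless.irrefl _ h) (fun h => H.loopless.irrefl _ h.2)⟩

/-- The copies of `H` are decomposed separately and then merged one at a time. A union of copies
has one type for each copy, since all vertices of a copy agree outside it. -/
lemma Built.lexProd {W U : Type} [Fintype W] [Nonempty W] (G : SimpleGraph W) (H : SimpleGraph U)
    (h : Built (FewTypes W H) Set.univ) : Built (FewTypes W (lexProd G H)) Set.univ := by
  have hblock : ∀ a : W, Built (FewTypes W (_root_.lexProd G H)) (Prod.fst ⁻¹' {a}) := by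
    intro a
    have := Built.map (G := _root_.lexProd G H)
      (Function.Embedding.sectR a U) ?_ ?_ h
    · convert this using 1
      ext ⟨b, u⟩
      simp [eq_comm]
    · intro x y
      simp [_root_.lexProd]
    · rintro ⟨b, z⟩ hz x y
      have hab : a ≠ b := by
        rintro rfl
        exact hz ⟨z, rfl⟩
      simp [_root_.lexProd, hab]
  have hS : ∀ S : Finset W, S.Nonempty →
      Built (FewTypes W (_root_.lexProd G H)) (Prod.fst ⁻¹' (S : Set W)) := by
    intro S hS
    induction hS using Finset.Nonempty.cons_induction with
    | singleton a => simpa using hblock a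
    | cons a s ha hs ih =>
      rw [Finset.coe_cons, Set.insert_eq, Set.preimage_union]
      refine Built.union _ _ (hblock a) ih ?_ ?_
      · apply Disjoint.preimage
        simpa using ha
      · refine ⟨Prod.fst, ?_⟩
        rintro x hx y hy hxy z hz
        have h1 : x.1 ≠ z.1 := by
          intro h
          apply hz
          simpa only [← Set.preimage_union, Set.mem_preimage, h] using hx
        have h2 : y.1 ≠ z.1 := hxy ▸ h1
        simp [_root_.lexProd, h2, hxy]
  simpa using hS Finset.univ Finset.univ_nonempty

/-- Every finite set of pairwise `R`-related elements has at most `β` elements. -/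
def SizeBound {U : Type} (R : U → U → Prop) (β : ℕ) : Prop :=
  ∀ S : Finset U, (∀ x ∈ S, ∀ y ∈ S, x ≠ y → R x y) → S.card ≤ β

/-- Bounds on clique numbers, and bounds on independence numbers, multiply under the
lexicographic product. -/
lemma SizeBound.prod {W U : Type} {R₁ : W → W → Prop} {R₂ : U → U → Prop}
    {R : W × U → W × U → Prop} {α β : ℕ} (h₁ : SizeBound R₁ α) (h₂ : SizeBound R₂ β)
    (hR₁ : ∀ x y, R x y → x.1 ≠ y.1 → R₁ x.1 y.1)
    (hR₂ : ∀ x y, R x y → x.1 = y.1 → R₂ x.2 y.2) : SizeBound R (α * β) := by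
  intro S hS
  have hproj : (S.image Prod.fst).card ≤ α := by
    apply h₁
    intro a ha b hb hab
    obtain ⟨x, hx, rfl⟩ := Finset.mem_image.1 ha
    obtain ⟨y, hy, rfl⟩ := Finset.mem_image.1 hb
    exact hR₁ x y (hS x hx y hy (fun h => hab (by rw [h]))) hab
  have hfib : ∀ a ∈ S.image Prod.fst, (S.filter (fun x => x.1 = a)).card ≤ β := by
    intro a _
    have hinj : Set.InjOn Prod.snd (S.filter (fun x => x.1 = a) : Set (W × U)) := by
      intro x hx y hy hxy
      simp only [Finset.coe_filter, Set.mem_ofPred_eq] at hx hy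
      exact Prod.ext (hx.2.trans hy.2.symm) hxy
    rw [← Finset.card_image_of_injOn hinj]
    apply h₂
    intro u hu v hv huv
    obtain ⟨x, hx, rfl⟩ := Finset.mem_image.1 hu
    obtain ⟨y, hy, rfl⟩ := Finset.mem_image.1 hv
    rw [Finset.mem_filter] at hx hy
    exact hR₂ x y (hS x hx.1 y hy.1 (fun h => huv (by rw [h]))) (hx.2.trans hy.2.symm)
  calc S.card ≤ β * (S.image Prod.fst).card := Finset.card_le_mul_card_image S β hfib
    _ ≤ α * β := by rw [mul_comm]; exact Nat.mul_le_mul_right _ hproj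

/-- The `k`-th lexicographic power `H` of `G`: clique and independence bounds are raised to the
power `k`, while the number of types in the binary decomposition stays `|W|`. -/
lemma exists_lexPow {W : Type} [Fintype W] [Nonempty W] (G : SimpleGraph W) {ω α : ℕ}
    (hω : SizeBound G.Adj ω) (hα : SizeBound (fun x y => ¬ G.Adj x y) α) (k : ℕ) :
    ∃ (U : Type) (_ : Fintype U) (H : SimpleGraph U), Fintype.card U = Fintype.card W ^ k ∧
      SizeBound H.Adj (ω ^ k) ∧ SizeBound (fun x y => ¬ H.Adj x y) (α ^ k) ∧
      Built (FewTypes W H) Set.univ := by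
  induction k with
  | zero =>
    refine ⟨Unit, inferInstance, ⊥, by simp, ?_, ?_, ?_⟩
    · intro S _
      simpa using S.card_le_univ
    · intro S _
      simpa using S.card_le_univ
    · have : (Set.univ : Set Unit) = {()} := by ext; simp
      rw [this]
      exact Built.single _ ⟨fun _ => Classical.arbitrary W, by simp⟩
  | succ k ih =>
    obtain ⟨U, _, H, hc, h1, h2, h3⟩ := ih
    refine ⟨W × U, inferInstance, lexProd G H, ?_, ?_, ?_, h3.lexProd G H⟩
    · rw [Fintype.card_prod, hc, pow_succ']
    · rw [pow_succ']
      refine hω.prod h1 ?_ ?_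
      · rintro x y (h | h) hne
        · exact h
        · exact absurd h.1 hne
      · rintro x y (h | h) heq
        · exact absurd (heq ▸ h) (G.loopless.irrefl _)
        · exact h.2
    · rw [pow_succ']
      refine hα.prod h2 ?_ ?_
      · exact fun x y h _ hadj => h (Or.inl hadj)
      · exact fun x y h heq hadj => h (Or.inr ⟨heq, hadj⟩)

/-! ### The polarity graph of the affine plane -/

/-- The polarity graph on the affine plane over `ZMod p`: the point `y` is joined to the points
`x ≠ y` of its line `x.2 = y.1 * x.1 - y.2`. -/
def polGraph (p : ℕ) : SimpleGraph (ZMod p × ZMod p) where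
  Adj x y := x ≠ y ∧ x.2 + y.2 = x.1 * y.1
  symm := ⟨fun x y h => ⟨h.1.symm, by rw [add_comm, h.2, mul_comm]⟩⟩
  loopless := ⟨fun _ h => h.1 rfl⟩

lemma polGraph_common {p : ℕ} [Fact p.Prime] {x y u v : ZMod p × ZMod p} (hxy : x ≠ y)
    (hxu : x.2 + u.2 = x.1 * u.1) (hxv : x.2 + v.2 = x.1 * v.1)
    (hyu : y.2 + u.2 = y.1 * u.1) (hyv : y.2 + v.2 = y.1 * v.1) : u = v := by
  have h : (x.1 - y.1) * (u.1 - v.1) = 0 := by linear_combination -hxu + hxv + hyu - hyv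
  rcases mul_eq_zero.1 h with h | h
  · exfalso
    have h1 : x.1 = y.1 := sub_eq_zero.1 h
    refine hxy (Prod.ext h1 ?_)
    linear_combination hxu - hyu + u.1 * h1
  · have h1 : u.1 = v.1 := sub_eq_zero.1 h
    refine Prod.ext h1 ?_
    linear_combination hxu - hxv + x.1 * h1

/-- Two points have at most one common neighbour, so there is no `K₄`. -/
lemma polGraph_clique (p : ℕ) [Fact p.Prime] : SizeBound (polGraph p).Adj 3 := by
  intro S hS
  by_contra hcon
  obtain ⟨T, hTS, hT⟩ := Finset.exists_subset_card_eq (show 4 ≤ S.card by omega)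
  obtain ⟨x, y, u, v, hxy, hxu, hxv, hyu, hyv, huv, rfl⟩ := Finset.card_eq_four.1 hT
  have hx : x ∈ S := hTS (by simp)
  have hy : y ∈ S := hTS (by simp)
  have hu : u ∈ S := hTS (by simp)
  have hv : v ∈ S := hTS (by simp)
  exact huv (polGraph_common hxy (hS x hx u hu hxu).2 (hS x hx v hv hxv).2
    (hS y hy u hu hyu).2 (hS y hy v hv hyv).2)

/-- An independent set has at most `2 * p ^ (3 / 2)` points, by a second moment count: the lines
of the points of `S` cover an average point `|S| / p` times with variance at most `|S| / p`,
but cover each point of `S` at most once. -/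
lemma polGraph_indep {p : ℕ} [Fact p.Prime] (S : Finset (ZMod p × ZMod p))
    (hS : ∀ x ∈ S, ∀ y ∈ S, x ≠ y → ¬ (polGraph p).Adj x y) : S.card ^ 2 ≤ 4 * p ^ 3 := by
  have hp : 1 ≤ p := (Fact.out : p.Prime).one_lt.le
  let I : ZMod p × ZMod p → ZMod p × ZMod p → ℤ := fun x y => if x.2 + y.2 = x.1 * y.1 then 1 else 0
  let d : ZMod p × ZMod p → ℤ := fun y => ∑ x ∈ S, I x y
  let s : ℤ := S.card
  have hI1 : ∀ x, ∑ y, I x y = p := by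
    intro x
    have h1 : ∀ a : ZMod p, ∑ b : ZMod p, I x (a, b) = 1 := by
      intro a
      have : ∀ b : ZMod p, I x (a, b) = if b = x.1 * a - x.2 then 1 else 0 := by
        intro b
        have : x.2 + b = x.1 * a ↔ b = x.1 * a - x.2 := by
          rw [eq_sub_iff_add_eq, add_comm]
        simp only [I, this]
      simp [this]
    rw [Fintype.sum_prod_type]
    simp [h1, ZMod.card]
  have hI2 : ∀ x x', x ≠ x' → ∑ y, I x y * I x' y ≤ 1 := by
    intro x x' hne
    have : ∀ y, I x y * I x' y =
        if (x.2 + y.2 = x.1 * y.1 ∧ x'.2 + y.2 = x'.1 * y.1) then 1 else 0 := by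
      intro y
      simp only [I]
      split_ifs <;> simp_all
    simp only [this, Finset.sum_boole]
    norm_cast
    rw [Finset.card_le_one]
    intro a ha b hb
    simp only [Finset.mem_filter, Finset.mem_univ, true_and] at ha hb
    exact polGraph_common hne ha.1 hb.1 ha.2 hb.2
  have hI3 : ∀ x, ∑ y, I x y * I x y = p := by
    intro x
    rw [← hI1 x]
    refine Finset.sum_congr rfl (fun y _ => ?_)
    simp only [I]
    split_ifs <;> simp
  have hd1 : ∑ y, d y = s * p := by
    simp only [d]
    rw [Finset.sum_comm]
    simp [hI1, s]
  have hd2 : ∑ y, d y ^ 2 ≤ s * p + s ^ 2 := by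
    have h1 : ∑ y, d y ^ 2 = ∑ x ∈ S, ∑ x' ∈ S, ∑ y, I x y * I x' y := by
      simp only [d, sq, Finset.sum_mul_sum]
      rw [Finset.sum_comm]
      refine Finset.sum_congr rfl (fun x _ => ?_)
      rw [Finset.sum_comm]
    rw [h1]
    have h2 : ∀ x ∈ S, ∑ x' ∈ S, ∑ y, I x y * I x' y ≤ p + s := by
      intro x hx
      calc ∑ x' ∈ S, ∑ y, I x y * I x' y ≤ ∑ x' ∈ S, ((if x = x' then (p : ℤ) else 0) + 1) := by
            refine Finset.sum_le_sum (fun x' _ => ?_)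
            by_cases h : x = x'
            · subst h
              rw [hI3]; simp
            · simpa [h] using hI2 x x' h
        _ = p + s := by
            rw [Finset.sum_add_distrib]
            simp [hx, s]
    calc _ ≤ ∑ x ∈ S, ((p : ℤ) + s) := Finset.sum_le_sum h2
      _ = s * p + s ^ 2 := by simp [s]; ring
  have hcard : ∑ _y : ZMod p × ZMod p, (1 : ℤ) = p ^ 2 := by
    simp [ZMod.card, sq]
  have hvar : ∑ y, (p * d y - s) ^ 2 ≤ p ^ 3 * s := by
    have h1 : ∑ y, (p * d y - s) ^ 2 =
        p ^ 2 * ∑ y, d y ^ 2 - 2 * p * s * ∑ y, d y + s ^ 2 * ∑ _y : ZMod p × ZMod p, (1 : ℤ) := by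
      rw [Finset.mul_sum, Finset.mul_sum, Finset.mul_sum, ← Finset.sum_sub_distrib,
        ← Finset.sum_add_distrib]
      refine Finset.sum_congr rfl (fun y _ => by ring)
    rw [h1, hd1, hcard]
    have := mul_le_mul_of_nonneg_left hd2 (sq_nonneg (p : ℤ))
    linarith
  -- a point of `S` lies on no line of `S`, except possibly its own
  have hdS : ∀ y ∈ S, d y ≤ 1 := by
    intro y hy
    have : d y = I y y := by
      refine Finset.sum_eq_single_of_mem y hy (fun x hx hxy => ?_)
      have := hS x hx y hy hxy
      simp only [I]
      rw [if_neg]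
      exact fun h => this ⟨hxy, h⟩
    rw [this]
    simp only [I]
    split_ifs <;> simp
  have hp' : (1 : ℤ) ≤ p := by exact_mod_cast hp
  have hgoal : s ^ 2 ≤ 4 * (p : ℤ) ^ 3 := by
    have hs0 : 0 ≤ s := Int.natCast_nonneg _
    by_cases hsp : s ≤ p
    · nlinarith [pow_le_pow_left₀ hs0 hsp 2, mul_le_mul_of_nonneg_left hp' (sq_nonneg (p : ℤ)),
        sq_nonneg (p : ℤ)]
    · push Not at hsp
      have h1 : s * (s - p) ^ 2 ≤ ∑ y, (p * d y - s) ^ 2 := by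
        calc s * (s - p) ^ 2 = ∑ y ∈ S, (s - p) ^ 2 := by simp [s]
          _ ≤ ∑ y ∈ S, (p * d y - s) ^ 2 := by
              refine Finset.sum_le_sum (fun y hy => ?_)
              have := hdS y hy
              have h2 : s - p ≤ s - p * d y := by nlinarith
              have := pow_le_pow_left₀ (by linarith) h2 2
              nlinarith
          _ ≤ ∑ y, (p * d y - s) ^ 2 :=
              Finset.sum_le_univ_sum_of_nonneg (fun y => sq_nonneg _)
      have h2 : (s - p) ^ 2 ≤ (p : ℤ) ^ 3 := by
        have : s * (s - p) ^ 2 ≤ s * p ^ 3 := by linarith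
        exact le_of_mul_le_mul_left this (by linarith)
      nlinarith [sq_nonneg (s - 2 * p), mul_le_mul_of_nonneg_left hp' (sq_nonneg (p : ℤ))]
  simp only [s] at hgoal
  exact_mod_cast hgoal

/-! ### The lower bound -/

/-- A graph of rankwidth at most `r` whose clique number is at most `3 ^ k` and whose chromatic
number is at least `(p / 4) ^ (k / 2)`. It is the `k`-th lexicographic power of the polarity
graph, together with an isolated vertex at which the decomposition tree is rooted. -/
lemma exists_graph (r k p : ℕ) [Fact p.Prime] (hp : p ^ 2 ≤ r) :
    ∃ (n : ℕ) (G : SimpleGraph (Fin n)), rankw G ≤ r ∧ 1 ≤ G.cliqueNum ∧ G.cliqueNum ≤ 3 ^ k ∧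
      p ^ k ≤ 4 ^ k * G.chromaticNumber.toNat ^ 2 := by
  have hp0 : 0 < p := (Fact.out : p.Prime).pos
  have hα : SizeBound (fun x y => ¬ (polGraph p).Adj x y) (Nat.sqrt (4 * p ^ 3)) :=
    fun S hS => Nat.le_sqrt'.2 (polGraph_indep S hS)
  obtain ⟨U, _, H, hcard, h1, h2, h3⟩ := exists_lexPow (polGraph p) (polGraph_clique p) hα k
  have hW : Fintype.card (ZMod p × ZMod p) = p ^ 2 := by simp [ZMod.card, sq]
  rw [hW] at hcard
  have : Nonempty U := Fintype.card_pos_iff.1 (by rw [hcard]; positivity)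
  let f : U ↪ Fin (Fintype.card U + 1) :=
    (Fintype.equivFin U).toEmbedding.trans Fin.castSuccEmb
  have hrange : Set.range f = {Fin.last _}ᶜ := by
    ext x
    constructor
    · rintro ⟨u, rfl⟩
      exact (Fin.castSucc_lt_last (Fintype.equivFin U u)).ne
    · intro hx
      obtain ⟨y, rfl⟩ := Fin.exists_castSucc_eq.2 hx
      exact ⟨(Fintype.equivFin U).symm y, by simp [f]⟩
  let G : SimpleGraph (Fin (Fintype.card U + 1)) := H.map f
  have hGadj : ∀ x y, G.Adj (f x) (f y) ↔ H.Adj x y := fun x y => SimpleGraph.map_adj_apply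
  refine ⟨_, G, ?_, ?_, ?_, ?_⟩
  · refine Nat.sInf_le (rankDecompWidthLE_of_built G r (FewTypes (ZMod p × ZMod p) G)
      (fun X hX => ?_) (Fin.last _) ?_)
    · have := hX.cutRank_le
      rw [hW] at this
      exact ⟨this.1.trans hp, this.2.trans hp⟩
    · rw [← hrange, ← Set.image_univ]
      refine Built.map f hGadj (fun z hz x y => ?_) h3
      have : ∀ x, ¬ G.Adj (f x) z := by
        rintro x ⟨-, a, b, -, -, rfl⟩
        exact hz ⟨b, rfl⟩
      simp [this]
  · have : G.IsClique (({Fin.last _} : Finset (Fin (Fintype.card U + 1))) : Set _) := by simp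
    simpa using this.card_le_cliqueNum
  · have hfree : H.CliqueFree (3 ^ k + 1) := by
      intro S hS
      have := h1 S (fun x hx y hy hxy => hS.isClique hx hy hxy)
      rw [hS.card_eq] at this
      omega
    have hfree' : G.CliqueFree (3 ^ k + 1) := SimpleGraph.cliqueFree_map_iff.2 hfree
    obtain ⟨S, hS⟩ := G.exists_isNClique_cliqueNum
    by_contra hcon
    exact hfree'.mono (by omega) S hS
  · set m := G.chromaticNumber.toNat with hm
    have hcol : G.Colorable m := G.colorable_chromaticNumber_of_fintype
    have hcolH : H.Colorable m := hcol.of_hom (SimpleGraph.Embedding.map f H).toHom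
    obtain ⟨c⟩ := hcolH
    have hfib : Fintype.card U ≤ m * Nat.sqrt (4 * p ^ 3) ^ k := by
      have := Finset.card_le_mul_card_image_of_maps_to (s := (Finset.univ : Finset U))
        (t := (Finset.univ : Finset (Fin m))) (f := c) (fun _ _ => Finset.mem_univ _)
        (Nat.sqrt (4 * p ^ 3) ^ k) (fun a _ => h2 _ (fun x hx y hy _ hadj => by
          simp only [Finset.mem_filter, Finset.mem_univ, true_and] at hx hy
          exact c.valid hadj (hx.trans hy.symm)))
      simpa [mul_comm] using this
    have hsq : (p ^ 2) ^ k ≤ m * Nat.sqrt (4 * p ^ 3) ^ k := hcard ▸ hfib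
    have hcalc : p ^ k * (p ^ 3) ^ k ≤ 4 ^ k * m ^ 2 * (p ^ 3) ^ k := by
      calc p ^ k * (p ^ 3) ^ k = ((p ^ 2) ^ k) ^ 2 := by ring
        _ ≤ (m * Nat.sqrt (4 * p ^ 3) ^ k) ^ 2 := Nat.pow_le_pow_left hsq 2
        _ = m ^ 2 * (Nat.sqrt (4 * p ^ 3) ^ 2) ^ k := by ring
        _ ≤ m ^ 2 * (4 * p ^ 3) ^ k :=
            Nat.mul_le_mul_left _ (Nat.pow_le_pow_left (Nat.sqrt_le' _) k)
        _ = 4 ^ k * m ^ 2 * (p ^ 3) ^ k := by rw [mul_pow]; ring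
    exact Nat.le_of_mul_le_mul_right hcalc (by positivity)

lemma eval_le_const_mul_pow (P : Polynomial ℝ) :
    ∃ C : ℝ, 0 ≤ C ∧ ∀ x : ℝ, 1 ≤ x → P.eval x ≤ C * x ^ P.natDegree := by
  refine ⟨∑ i ∈ Finset.range (P.natDegree + 1), |P.coeff i|,
    Finset.sum_nonneg (fun i _ => abs_nonneg _), fun x hx => ?_⟩
  rw [Polynomial.eval_eq_sum_range, Finset.sum_mul]
  refine Finset.sum_le_sum (fun i hi => ?_)
  have hi : i ≤ P.natDegree := by simpa [Nat.lt_succ_iff] using hi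
  have h0 : (0 : ℝ) ≤ x ^ i := by positivity
  calc P.coeff i * x ^ i ≤ |P.coeff i| * x ^ i := mul_le_mul_of_nonneg_right (le_abs_self _) h0
    _ ≤ |P.coeff i| * x ^ P.natDegree :=
        mul_le_mul_of_nonneg_left (pow_le_pow_right₀ hx hi) (abs_nonneg _)

lemma prime_le_of_bound (r p : ℕ) [Fact p.Prime] (hp : p ^ 2 ≤ r) (P : Polynomial ℝ)
    (hP : ∀ (n : ℕ) (G : SimpleGraph (Fin n)), rankw G ≤ r →
        (G.chromaticNumber.toNat : ℝ) ≤ P.eval (G.cliqueNum : ℝ)) :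
    (p : ℝ) ≤ 4 * 9 ^ P.natDegree := by
  obtain ⟨C, hC, hPC⟩ := eval_le_const_mul_pow P
  set d := P.natDegree
  by_contra hcon
  push Not at hcon
  have hlt : 1 < (p : ℝ) / (4 * 9 ^ d) := by
    rw [one_lt_div (by positivity)]; exact hcon
  obtain ⟨k, hk⟩ := pow_unbounded_of_one_lt (C ^ 2) hlt
  obtain ⟨n, G, hrw, hω1, hω, hχ⟩ := exists_graph r k p hp
  have hχ' : (p : ℝ) ^ k ≤ 4 ^ k * (G.chromaticNumber.toNat : ℝ) ^ 2 := by exact_mod_cast hχ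
  have hω1' : (1 : ℝ) ≤ G.cliqueNum := by exact_mod_cast hω1
  have hω' : (G.cliqueNum : ℝ) ≤ 3 ^ k := by exact_mod_cast hω
  have hχ2 : (G.chromaticNumber.toNat : ℝ) ≤ C * (3 ^ k) ^ d :=
    ((hP n G hrw).trans (hPC _ hω1')).trans
      (mul_le_mul_of_nonneg_left (pow_le_pow_left₀ (by positivity) hω' d) hC)
  have h1 : (p : ℝ) ^ k ≤ C ^ 2 * (4 * 9 ^ d) ^ k := by
    calc (p : ℝ) ^ k ≤ 4 ^ k * (G.chromaticNumber.toNat : ℝ) ^ 2 := hχ'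
      _ ≤ 4 ^ k * (C * (3 ^ k) ^ d) ^ 2 := by gcongr
      _ = C ^ 2 * (4 * (3 ^ d) ^ 2) ^ k := by rw [mul_pow 4]; ring
      _ = C ^ 2 * (4 * 9 ^ d) ^ k := by rw [pow_right_comm]; norm_num
  rw [div_pow, lt_div_iff₀ (by positivity)] at hk
  exact absurd h1 (not_le.2 hk)

/-- There are `c > 0` and `r₀` such that for every `r ≥ r₀` and every real polynomial `P`,
if every finite graph of rankwidth at most `r` satisfies `χ(G) ≤ P(ω(G))`, then
`deg P ≥ c · log r`. -/
theorem rankw_chi_poly_degree_lower_bound :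
    ∃ c : ℝ, 0 < c ∧ ∃ r₀ : ℕ, ∀ r : ℕ, r₀ ≤ r → ∀ P : Polynomial ℝ,
      (∀ (n : ℕ) (G : SimpleGraph (Fin n)), rankw G ≤ r →
        (G.chromaticNumber.toNat : ℝ) ≤ P.eval (G.cliqueNum : ℝ)) →
      c * Real.log r ≤ (P.natDegree : ℝ) := by
  refine ⟨1 / (2 * Real.log 81), by have := Real.log_pos (show (1 : ℝ) < 81 by norm_num); positivity,
    4096, fun r hr P hP => ?_⟩
  have hs : 64 ≤ Nat.sqrt r := Nat.le_sqrt'.2 (by omega)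
  -- Bertrand's postulate gives a prime `p` with `√r / 2 ≤ p ≤ √r`
  obtain ⟨p, hp, hp1, hp2⟩ := Nat.exists_prime_lt_and_le_two_mul (Nat.sqrt r / 2) (by omega)
  have : Fact p.Prime := ⟨hp⟩
  have hpr : p ^ 2 ≤ r := Nat.le_sqrt'.1 (by omega)
  have hrp : r ≤ 4 * p ^ 2 := by
    have h1 : r < (Nat.sqrt r + 1) ^ 2 := Nat.lt_succ_sqrt' r
    have h2 : Nat.sqrt r + 1 ≤ 2 * p := by omega
    nlinarith [Nat.pow_le_pow_left h2 2]
  have hb := prime_le_of_bound r p hpr P hP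
  set d := P.natDegree
  have hr64 : (r : ℝ) ≤ 64 * 81 ^ d := by
    calc (r : ℝ) ≤ 4 * (p : ℝ) ^ 2 := by exact_mod_cast hrp
      _ ≤ 4 * (4 * 9 ^ d) ^ 2 := by gcongr
      _ = 64 * (9 ^ d) ^ 2 := by ring
      _ = 64 * 81 ^ d := by rw [pow_right_comm]; norm_num
  have hr0 : (4096 : ℝ) ≤ r := by exact_mod_cast hr
  have hlog : Real.log r ≤ Real.log 64 + d * Real.log 81 := by
    rw [← Real.log_pow, ← Real.log_mul (by norm_num) (by positivity)]
    exact Real.log_le_log (by linarith) hr64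
  -- since `4096 = 64 ^ 2`, the additive constant is absorbed by half of `log r`
  have hlog64 : 2 * Real.log 64 ≤ Real.log r := by
    have h1 : 2 * Real.log 64 = Real.log 4096 := by
      rw [show (4096 : ℝ) = 64 ^ 2 by norm_num, Real.log_pow]
      norm_num
    rw [h1]
    exact Real.log_le_log (by norm_num) hr0
  have h81 : 0 < Real.log 81 := Real.log_pos (by norm_num)
  rw [div_mul_eq_mul_div, one_mul, div_le_iff₀ (by positivity)]
  linarith
end

section
/- Let G be a finite simple graph whose vertex set carries a linear order. If u and v are both active vertices and τ(u) = τ(v), then u = v. -/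
/-!
The neighborhoods are read as vectors over `𝔽₂`. Let `t = τ(u) = τ(v)` with `u < v < t`, and let
`s` be the predecessor of `t`, so that `V^{>s} = V^{>t} ∪ {t}`. At `t`, both `N(u)` and `N(v)`
are sums of neighborhoods of smaller vertices, over sets `A` and `B` say; hence `N(u) ⊕ N_⊕(A)`
and `N(v) ⊕ N_⊕(B)` vanish on `V^{>t}`. As `u` and `v` belong to `B_s`, neither vanishes on
`V^{>s}`, so both contain `t`. Their sum therefore vanishes on `V^{>s}`, which expresses
`N^{>s}(v)` through the vertices of `A ∆ {u} ∆ B`, all smaller than `v`, contradicting `v ∈ B_s`.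
-/

open scoped Classical symmDiff

variable {V : Type}

/-- `N^{>t}(v)`: the neighbors of `v` that are greater than `t`. -/
def Ngt (G : SimpleGraph V) [LT V] (t v : V) : Set V := {w | G.Adj v w ∧ t < w}

/-- `N_⊕(M)`: the symmetric difference `⊕_{v ∈ M} N(v)` of the neighborhoods of the
vertices of `M`, i.e. the set of vertices adjacent to an odd number of elements of `M`. -/
noncomputable def NSym (G : SimpleGraph V) (M : Finset V) : Set V :=
  {w | Odd (M.filter (fun v => G.Adj v w)).card}

/-- `N_⊕^{>t}(M) = N_⊕(M) ∩ V^{>t}`. -/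
noncomputable def NSymGt (G : SimpleGraph V) [LT V] (t : V) (M : Finset V) : Set V :=
  NSym G M ∩ {w | t < w}

/-- The active basis `B_t`: the set of vertices `v ≤ t` such that `N^{>t}(v)` is not the
symmetric difference of the `N^{>t}`-neighborhoods of a set of vertices smaller than `v`. -/
noncomputable def Bset [Fintype V] [LinearOrder V] (G : SimpleGraph V) (t : V) : Finset V :=
  Finset.univ.filter (fun v => v ≤ t ∧
    ¬ ∃ B : Finset V, (∀ b ∈ B, b < v) ∧ Ngt G t v = NSymGt G t B)

/-- `τ(v)`: the least `t ≥ v` with `v ∉ B_t`.  (It exists since `v ∉ B_{max V}`; the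
maximum of `V` is inserted only to make the minimum well-defined.) -/
noncomputable def tau [Fintype V] [LinearOrder V] [Nonempty V] (G : SimpleGraph V) (v : V) :
    V :=
  (insert (Finset.univ.max' Finset.univ_nonempty)
    (Finset.univ.filter (fun t => v ≤ t ∧ v ∉ Bset G t))).min' (Finset.insert_nonempty _ _)

/-- `τ(M) = min_{v ∈ M} τ(v)` for a nonempty finset `M` (junk value for `M = ∅`). -/
noncomputable def tauSet [Fintype V] [LinearOrder V] [Nonempty V] (G : SimpleGraph V)
    (M : Finset V) : V :=
  if h : M.Nonempty then (M.image (tau G)).min' (h.image _)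
  else Finset.univ.max' Finset.univ_nonempty

/-- A nonempty set `M` is active if `max M < τ(M)`. -/
def ActiveSet [Fintype V] [LinearOrder V] [Nonempty V] (G : SimpleGraph V) (M : Finset V) :
    Prop :=
  ∃ h : M.Nonempty, M.max' h < tauSet G M

/-- Membership in the collection `Z`: the empty set, the singletons, and the active sets. -/
def Zmem [Fintype V] [LinearOrder V] [Nonempty V] (G : SimpleGraph V) (M : Finset V) : Prop :=
  M = ∅ ∨ (∃ v : V, M = {v}) ∨ ActiveSet G M

/-- `F₀(v)`: the unique subset `B` of `B_{τ(v)}` with `N^{>τ(v)}(v) = N_⊕^{>τ(v)}(B)`. -/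
noncomputable def F0 [Fintype V] [LinearOrder V] [Nonempty V] (G : SimpleGraph V) (v : V) :
    Finset V :=
  if h : ∃ B : Finset V, B ⊆ Bset G (tau G v) ∧ Ngt G (tau G v) v = NSymGt G (tau G v) B
  then h.choose else ∅

/-- The map `F`: `F(∅) = ∅` and `F(M) = M ∆ {v} ∆ F₀(v)` where `v` is the (for `M ∈ Z`,
unique) element of `M` with `τ(v) = τ(M)`. -/
noncomputable def Fmap [Fintype V] [LinearOrder V] [Nonempty V] (G : SimpleGraph V)
    (M : Finset V) : Finset V :=
  if h : ∃ v ∈ M, tau G v = tauSet G M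
  then (M ∆ {h.choose}) ∆ F0 G h.choose
  else ∅

lemma mem_NSym_symmDiff [DecidableEq V] (G : SimpleGraph V) (A B : Finset V) (w : V) :
    w ∈ NSym G (A ∆ B) ↔ ¬ (w ∈ NSym G A ↔ w ∈ NSym G B) := by
  simp only [NSym, Set.mem_ofPred_eq]
  have hA := Finset.card_sdiff_add_card_inter (A.filter (G.Adj · w)) (B.filter (G.Adj · w))
  have hB := Finset.card_sdiff_add_card_inter (B.filter (G.Adj · w)) (A.filter (G.Adj · w))
  rw [Finset.inter_comm] at hB
  have hS : ((A ∆ B).filter (G.Adj · w)).card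
      = (A.filter (G.Adj · w) \ B.filter (G.Adj · w)).card
        + (B.filter (G.Adj · w) \ A.filter (G.Adj · w)).card := by
    rw [← Finset.card_union_of_disjoint disjoint_sdiff_sdiff]
    congr 1
    ext x
    simp only [Finset.mem_filter, Finset.mem_symmDiff, Finset.mem_union, Finset.mem_sdiff]
    tauto
  rw [hS, ← hA, ← hB]
  simp only [Nat.odd_add, ← Nat.not_odd_iff_even]
  tauto

lemma mem_NSym_singleton (G : SimpleGraph V) (v w : V) : w ∈ NSym G {v} ↔ G.Adj v w := by
  by_cases h : G.Adj v w <;> simp [NSym, Finset.filter_singleton, h]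

/-- For `v ≤ t`, non-membership in `B_t`, with the equality of sets spelled out pointwise. -/
lemma notMem_Bset_iff [Fintype V] [LinearOrder V] (G : SimpleGraph V) {t v : V} (hvt : v ≤ t) :
    v ∉ Bset G t ↔ ∃ B : Finset V, (∀ b ∈ B, b < v) ∧
      ∀ w, t < w → (G.Adj v w ↔ w ∈ NSym G B) := by
  simp only [Bset, Finset.mem_filter, Finset.mem_univ, true_and, hvt, not_not]
  refine exists_congr fun B => and_congr_right fun _ => ?_
  simp only [Set.ext_iff, Ngt, NSymGt, Set.mem_inter_iff, Set.mem_ofPred_eq]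
  exact forall_congr' fun w => by tauto

lemma notMem_Bset_tau [Fintype V] [LinearOrder V] [Nonempty V] (G : SimpleGraph V) (v : V)
    (hv : v < tau G v) : v ∉ Bset G (tau G v) := by
  have hmem : tau G v ∈ _ := Finset.min'_mem _ (Finset.insert_nonempty
    (Finset.univ.max' Finset.univ_nonempty)
    (Finset.univ.filter (fun t => v ≤ t ∧ v ∉ Bset G t)))
  rcases Finset.mem_insert.1 hmem with h | h
  · -- There is no vertex above the maximum, so the empty set is a witness.
    refine (notMem_Bset_iff G hv.le).2 ⟨∅, by simp, fun w hw => ?_⟩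
    rw [h] at hw
    exact absurd (Finset.le_max' _ w (Finset.mem_univ w)) hw.not_ge
  · exact (Finset.mem_filter.1 h).2.2

lemma mem_Bset_of_lt_tau [Fintype V] [LinearOrder V] [Nonempty V] (G : SimpleGraph V) {v s : V}
    (hvs : v ≤ s) (hs : s < tau G v) : v ∈ Bset G s := by
  by_contra hcon
  refine hs.not_ge (Finset.min'_le _ _ (Finset.mem_insert_of_mem ?_))
  simp [hvs, hcon]

lemma tau_ne_of_active_of_lt [Fintype V] [LinearOrder V] [Nonempty V] (G : SimpleGraph V)
    {u v : V} (hu : u < tau G u) (hv : v < tau G v) (huv : u < v) : tau G u ≠ tau G v := by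
  intro h
  obtain ⟨s, hvs, hst, hs⟩ : ∃ s, v ≤ s ∧ s < tau G v ∧ ∀ w, s < w → w = tau G v ∨ tau G v < w := by
    have hne : (Finset.univ.filter (· < tau G v)).Nonempty := ⟨v, by simpa using hv⟩
    refine ⟨Finset.max' _ hne, Finset.le_max' _ _ (by simpa using hv),
      by simp, fun w hw => ?_⟩
    by_contra! hcon
    exact hw.not_ge (Finset.le_max' _ _ (by simpa using lt_of_le_of_ne hcon.2 hcon.1))
  obtain ⟨A, hA, hA'⟩ := (notMem_Bset_iff G hu.le).1 (notMem_Bset_tau G u hu)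
  obtain ⟨B, hB, hB'⟩ := (notMem_Bset_iff G hv.le).1 (notMem_Bset_tau G v hv)
  have hus : u ≤ s := huv.le.trans hvs
  have huB : ¬ (u ∉ Bset G s) := not_not.2 (mem_Bset_of_lt_tau G hus (h ▸ hst))
  have hvB : ¬ (v ∉ Bset G s) := not_not.2 (mem_Bset_of_lt_tau G hvs hst)
  rw [notMem_Bset_iff G hus] at huB
  rw [notMem_Bset_iff G hvs] at hvB
  rw [h] at hA'
  have hAt : ¬ (G.Adj u (tau G v) ↔ tau G v ∈ NSym G A) := fun hcon =>
    huB ⟨A, hA, fun w hw => (hs w hw).elim (fun e => e ▸ hcon) (hA' w)⟩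
  have hBt : ¬ (G.Adj v (tau G v) ↔ tau G v ∈ NSym G B) := fun hcon =>
    hvB ⟨B, hB, fun w hw => (hs w hw).elim (fun e => e ▸ hcon) (hB' w)⟩
  refine hvB ⟨(A ∆ {u}) ∆ B, fun b hb => ?_, fun w hw => ?_⟩
  · simp only [Finset.mem_symmDiff, Finset.mem_singleton] at hb
    rcases hb with ⟨⟨h1, -⟩ | ⟨rfl, -⟩, -⟩ | ⟨h1, -⟩
    exacts [(hA b h1).trans huv, huv, hB b h1]
  · rw [mem_NSym_symmDiff, mem_NSym_symmDiff, mem_NSym_singleton]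
    rcases hs w hw with rfl | hw
    · tauto
    · have h1 := hA' w hw
      have h2 := hB' w hw
      tauto

/-- If `u` and `v` are active vertices with `τ(u) = τ(v)`, then `u = v`. -/
theorem tau_injective_on_active [Fintype V] [LinearOrder V] [Nonempty V] (G : SimpleGraph V)
    (u v : V) (hu : u < tau G u) (hv : v < tau G v) (h : tau G u = tau G v) : u = v := by
  rcases lt_trichotomy u v with huv | huv | huv
  · exact absurd h (tau_ne_of_active_of_lt G hu hv huv)
  · exact huv
  · exact absurd h.symm (tau_ne_of_active_of_lt G hv hu huv)
end
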